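/- arXiv:0905.1863 — 2 statements merged into one kernel-verified Lean document; each statement's English description precedes it below -/
import Mathlib

section
/- Assume μ and σ are bounded and continuous, σ(t,x) is invertible for every (t,x), and F is continuous in all variables and Lipschitz in (r,p,γ) uniformly in (t,x). Let φ : [0,T]×ℝ^d → ℝ be of class C^∞, bounded with bounded derivatives of all orders. Then for every (t,x) ∈ [0,T)×ℝ^d, the quotient ([c+φ](t',x') − T_h[c+φ](t',x'))/h converges to −(𝓛^X φ(t,x) + F(t, x, φ(t,x), Dφ(t,x), D²φ(t,x))) as (t',x') → (t,x), h ↓ 0 and c → 0 with the constraint t' + h ≤ T, where c + φ denotes the function (s,y) ↦ c + φ(s,y), 𝓛^X φ := ∂_t φ + μ·Dφ + (1/2)Tr[a D²φ], and Dφ, D²φ are the spatial gradient and Hessian of φ. -/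
/-!
The proof rests on Gaussian integration by parts (Stein's identity), `E[f(W) W_k] = h E[∂_k f(W)]`.
As `σ` is invertible, it gives the exact identities `E[ψ(X̂) H₁] = E[Dψ(X̂)]` (`integral_H1w`) and
`E[ψ(X̂) H₂] = E[D²ψ(X̂)]` (`integral_H2w`), so the apparent singularity in `h` of the weights
disappears.

By Brownian scaling, all expectations have the form `eulerMean μ σ g (t, x, r)`, the mean of
`g(t + r², x + r² μ(t,x) + r σ(t,x) z)` over a standard Gaussian `z`, with `r = √h`. By dominated
convergence this is jointly continuous in `(t, x, r)`, with value `g(t, x)` at `r = 0`. Hence the `F`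
term of the scheme is continuous in `(t, x, √h, c)` and has the expected limit.

For the remaining term, differentiation under the integral sign and Stein's identity show that the
derivative in `r` of the mean of `φ` is `2 r dynkinMean (t, x, r)`, where `dynkinMean` averages the
Dynkin operator with coefficients frozen at `(t, x)` (`eulerMean_hasDerivAt`). Cauchy's mean value
theorem, comparing with `r ↦ r²`, gives `(E[φ(t + h, X̂)] - φ(t, x)) / h = dynkinMean (t, x, ξ)` for
some `0 < ξ < √h` (`eulerMean_slope`), and `dynkinMean` is continuous with value `𝓛^X φ` at `r = 0`.
-/

open MeasureTheory ProbabilityTheory Matrix Real Set Function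

noncomputable section

attribute [local instance] Matrix.normedAddCommGroup Matrix.normedSpace

abbrev Vec (d : ℕ) := Fin d → ℝ
abbrev Mat (d : ℕ) := Matrix (Fin d) (Fin d) ℝ

/-- Law of the Gaussian vector `W_h` in `ℝ^d`, centered with covariance `h · I_d`. -/
def gaussVec (d : ℕ) (h : ℝ) : Measure (Vec d) :=
  Measure.pi fun _ => gaussianReal 0 h.toNNReal

/-- One step Euler scheme `X̂_h^{t,x} = x + μ(t,x) h + σ(t,x) W_h`. -/
def euler {d : ℕ} (μ : ℝ → Vec d → Vec d) (σ : ℝ → Vec d → Mat d)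
    (h t : ℝ) (x w : Vec d) : Vec d :=
  x + h • μ t x + (σ t x).mulVec w

/-- Weight `H_1^h(t,x) = (σ(t,x)ᵀ)⁻¹ W_h / h`. -/
def H1w {d : ℕ} (σ : ℝ → Vec d → Mat d) (h t : ℝ) (x w : Vec d) : Vec d :=
  (1 / h) • ((σ t x)ᵀ⁻¹.mulVec w)

/-- Weight `H_2^h(t,x) = (σ(t,x)ᵀ)⁻¹ (W_h W_hᵀ − h I_d) σ(t,x)⁻¹ / h²`. -/
def H2w {d : ℕ} (σ : ℝ → Vec d → Mat d) (h t : ℝ) (x w : Vec d) : Mat d :=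
  (1 / h ^ 2) • ((σ t x)ᵀ⁻¹ * (vecMulVec w w - h • (1 : Mat d)) * (σ t x)⁻¹)

/-- One-step operator acting on the next-time function `ψ`. -/
def step {d : ℕ} (F : ℝ → Vec d → ℝ → Vec d → Mat d → ℝ)
    (μ : ℝ → Vec d → Vec d) (σ : ℝ → Vec d → Mat d)
    (h t : ℝ) (ψ : Vec d → ℝ) (x : Vec d) : ℝ :=
  (∫ w, ψ (euler μ σ h t x w) ∂gaussVec d h)
    + h * F t x (∫ w, ψ (euler μ σ h t x w) ∂gaussVec d h)
        (fun i => ∫ w, ψ (euler μ σ h t x w) * H1w σ h t x w i ∂gaussVec d h)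
        (Matrix.of fun i j => ∫ w, ψ (euler μ σ h t x w) * H2w σ h t x w i j ∂gaussVec d h)

/-- The operator `T_h[ψ](t,x)`. -/
def Th {d : ℕ} (F : ℝ → Vec d → ℝ → Vec d → Mat d → ℝ)
    (μ : ℝ → Vec d → Vec d) (σ : ℝ → Vec d → Mat d)
    (ψ : ℝ → Vec d → ℝ) (h t : ℝ) (x : Vec d) : ℝ :=
  step F μ σ h t (ψ (t + h)) x

/-- Spatial gradient of `φ(t,·)` as a vector. -/
def gradx {d : ℕ} (φ : ℝ → Vec d → ℝ) (t : ℝ) (x : Vec d) : Vec d :=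
  fun i => fderiv ℝ (φ t) x (Pi.single i 1)

/-- Spatial Hessian of `φ(t,·)` as a matrix. -/
def hessx {d : ℕ} (φ : ℝ → Vec d → ℝ) (t : ℝ) (x : Vec d) : Mat d :=
  Matrix.of fun i j =>
    fderiv ℝ (fun y => fderiv ℝ (φ t) y (Pi.single j 1)) x (Pi.single i 1)

/-- The Dynkin operator `𝓛^X φ = ∂_t φ + μ·Dφ + (1/2) Tr[σσᵀ D²φ]`. -/
def LX {d : ℕ} (μ : ℝ → Vec d → Vec d) (σ : ℝ → Vec d → Mat d)
    (φ : ℝ → Vec d → ℝ) (t : ℝ) (x : Vec d) : ℝ :=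
  deriv (fun s => φ s x) t + μ t x ⬝ᵥ gradx φ t x
    + (1 / 2) * ((σ t x * (σ t x)ᵀ) * hessx φ t x).trace

/-! ### Gaussian integration by parts -/

/-- Stein's identity on the line, from integration by parts and the fact that the
derivative of the Gaussian density `p` at `s` is `-(s / v) * p s`. -/
theorem stein_one (v : NNReal) (hv : v ≠ 0) (f f' : ℝ → ℝ)
    (hf : ∀ s, HasDerivAt f (f' s) s)
    (h0 : Integrable f (gaussianReal 0 v))
    (h1 : Integrable (fun s => f s * s) (gaussianReal 0 v))
    (h2 : Integrable f' (gaussianReal 0 v)) :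
    ∫ s, f s * s ∂gaussianReal 0 v = v * ∫ s, f' s ∂gaussianReal 0 v := by
  have hint : ∀ g : ℝ → ℝ, Integrable g (gaussianReal 0 v) →
      Integrable (fun s => gaussianPDFReal 0 v s * g s) := by
    intro g hg
    rw [gaussianReal_of_var_ne_zero _ hv,
      integrable_withDensity_iff_integrable_smul' (measurable_gaussianPDF _ _)
        (ae_of_all _ fun _ => gaussianPDF_lt_top)] at hg
    simpa [toReal_gaussianPDF] using hg
  have hv' : (v : ℝ) ≠ 0 := by exact_mod_cast hv
  have hp : ∀ s, HasDerivAt (gaussianPDFReal 0 v) (-(s / v) * gaussianPDFReal 0 v s) s := by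
    intro s
    rw [gaussianPDFReal_def]
    have h : HasDerivAt (fun x : ℝ => -(x - 0) ^ 2 / (2 * (v : ℝ))) (-(s / v)) s := by
      have := ((((hasDerivAt_id s).sub_const 0).pow 2).neg).div_const (2 * (v : ℝ))
      refine this.congr_deriv ?_
      simp
      field_simp
    refine ((h.exp).const_mul _).congr_deriv ?_
    ring
  have key := integral_mul_deriv_eq_deriv_mul_of_integrable (u := f) (u' := f')
    (v := gaussianPDFReal 0 v) (v' := fun s => -(s / v) * gaussianPDFReal 0 v s) (fun s _ => hf s)
    (fun s _ => hp s)
    (by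
      refine ((hint _ h1).const_mul (-(v : ℝ)⁻¹)).congr (ae_of_all _ fun s => ?_)
      simp only [Pi.mul_apply]; field_simp)
    (by
      refine (hint _ h2).congr (ae_of_all _ fun s => ?_)
      simp only [Pi.mul_apply]; ring)
    (by
      refine (hint _ h0).congr (ae_of_all _ fun s => ?_)
      simp only [Pi.mul_apply]; ring)
  rw [integral_gaussianReal_eq_integral_smul hv, integral_gaussianReal_eq_integral_smul hv]
  have e1 : ∫ s, f s * (-(s / v) * gaussianPDFReal 0 v s)
      = -(v : ℝ)⁻¹ * ∫ s, gaussianPDFReal 0 v s • (f s * s) := by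
    rw [← integral_const_mul]
    congr 1; ext s; simp only [smul_eq_mul]; field_simp
  have e2 : ∫ s, f' s * gaussianPDFReal 0 v s = ∫ s, gaussianPDFReal 0 v s • f' s := by
    congr 1; ext s; simp only [smul_eq_mul]; ring
  rw [e1, e2] at key
  have := congrArg (fun y => -(v : ℝ) * y) key
  beta_reduce at this
  field_simp at this
  linarith

instance (d : ℕ) (h : ℝ) : IsProbabilityMeasure (gaussVec d h) := by
  unfold gaussVec; infer_instance

/-- Stein's identity in the `k`-th coordinate of a Gaussian vector: the one-dimensional identity on
almost every line parallel to the `k`-th axis, integrated by Fubini. -/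
theorem stein_pi {d : ℕ} {h : ℝ} (hh : 0 < h) (k : Fin d) (f f' : Vec d → ℝ)
    (hf : ∀ z s, HasDerivAt (fun s => f (update z k s)) (f' (update z k s)) s)
    (h0 : Integrable f (gaussVec d h))
    (h1 : Integrable (fun w => f w * w k) (gaussVec d h))
    (h2 : Integrable f' (gaussVec d h)) :
    ∫ w, f w * w k ∂gaussVec d h = h * ∫ w, f' w ∂gaussVec d h := by
  obtain ⟨n, rfl⟩ : ∃ n, d = n + 1 := ⟨d - 1, by have := k.2; omega⟩
  set v : NNReal := h.toNNReal with hvdef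
  have hv : v ≠ 0 := by simpa [hvdef] using hh
  have hvh : (v : ℝ) = h := by simp [hvdef, hh.le]
  set ν : Measure (Fin n → ℝ) := Measure.pi fun _ => gaussianReal 0 v
  have mp : MeasurePreserving (MeasurableEquiv.piFinSuccAbove (fun _ : Fin (n + 1) => ℝ) k).symm
      ((gaussianReal 0 v).prod ν) (gaussVec (n + 1) h) :=
    (measurePreserving_piFinSuccAbove (fun _ : Fin (n + 1) => gaussianReal 0 v) k).symm
  have hin : ∀ g : Vec (n + 1) → ℝ, Integrable g (gaussVec (n + 1) h) →
      Integrable (fun q : ℝ × (Fin n → ℝ) => g (k.insertNth q.1 q.2))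
        ((gaussianReal 0 v).prod ν) := fun g hg =>
    (mp.integrable_comp_emb (MeasurableEquiv.measurableEmbedding _)).2 hg
  have hfub : ∀ g : Vec (n + 1) → ℝ, Integrable g (gaussVec (n + 1) h) →
      ∫ w, g w ∂gaussVec (n + 1) h
        = ∫ y, ∫ s, g (k.insertNth s y) ∂gaussianReal 0 v ∂ν := fun g hg => by
    rw [← mp.integral_comp', ← integral_prod_symm _ (hin g hg)]
    rfl
  rw [hfub _ h1, hfub _ h2, ← integral_const_mul]
  refine integral_congr_ae ?_
  filter_upwards [(hin _ h0).prod_left_ae, (hin _ h1).prod_left_ae, (hin _ h2).prod_left_ae]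
    with y i0 i1 i2
  have hs : ∀ s : ℝ, HasDerivAt (fun s => f (k.insertNth s y)) (f' (k.insertNth s y)) s := by
    intro s
    have := hf (k.insertNth 0 y) s
    simpa using this
  simp only [Fin.insertNth_apply_same] at i1 ⊢
  rw [stein_one v hv _ _ hs i0 i1 i2, hvh]

/-! ### Smooth functions with bounded derivatives -/

/-- Smooth functions on `ℝ × ℝ^d` that are bounded together with all their derivatives. -/
def Nice {d : ℕ} (g : ℝ × Vec d → ℝ) : Prop :=
  ContDiff ℝ (⊤ : ℕ∞) g ∧ ∀ n : ℕ, ∃ C : ℝ, ∀ q, ‖iteratedFDeriv ℝ n g q‖ ≤ C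

/-- The directional derivative of `g` in the space-time direction `v`. -/
def dirD {d : ℕ} (g : ℝ × Vec d → ℝ) (v : ℝ × Vec d) (q : ℝ × Vec d) : ℝ := fderiv ℝ g q v

/-- The partial derivative of `g` in the `j`-th space variable. -/
def px {d : ℕ} (j : Fin d) (g : ℝ × Vec d → ℝ) : ℝ × Vec d → ℝ := dirD g (0, Pi.single j 1)

/-- The partial derivative of `g` in the time variable. -/
def pt {d : ℕ} (g : ℝ × Vec d → ℝ) : ℝ × Vec d → ℝ := dirD g (1, 0)

namespace Nice

variable {d : ℕ} {g : ℝ × Vec d → ℝ}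

theorem dirD (hg : Nice g) (v : ℝ × Vec d) : Nice (dirD g v) := by
  have h1 : ContDiff ℝ (⊤ : ℕ∞) (fderiv ℝ g) := hg.1.fderiv_right (by simp)
  refine ⟨h1.clm_apply contDiff_const, fun n => ?_⟩
  obtain ⟨C, hC⟩ := hg.2 (n + 1)
  refine ⟨‖v‖ * C, fun q => ?_⟩
  refine (norm_iteratedFDeriv_clm_apply_const (N := (⊤ : ℕ∞)) h1.contDiffAt
    (by exact_mod_cast le_top)).trans ?_
  rw [norm_iteratedFDeriv_fderiv]
  gcongr
  exact hC q

theorem px (hg : Nice g) (j : Fin d) : Nice (px j g) := hg.dirD _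

theorem pt (hg : Nice g) : Nice (pt g) := hg.dirD _

theorem continuous (hg : Nice g) : Continuous g := hg.1.continuous

theorem differentiable (hg : Nice g) : Differentiable ℝ g := hg.1.differentiable (by simp)

theorem bdd (hg : Nice g) : ∃ C : ℝ, ∀ q, ‖g q‖ ≤ C := by
  obtain ⟨C, hC⟩ := hg.2 0
  exact ⟨C, fun q => by simpa using hC q⟩

theorem fderiv_bdd (hg : Nice g) : ∃ C : ℝ, ∀ q, ‖fderiv ℝ g q‖ ≤ C := by
  obtain ⟨C, hC⟩ := hg.2 1
  exact ⟨C, fun q => by simpa [norm_iteratedFDeriv_one] using hC q⟩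

end Nice

theorem fderiv_prod_expand {d : ℕ} (g : ℝ × Vec d → ℝ) (q : ℝ × Vec d) (a : ℝ) (v : Vec d) :
    fderiv ℝ g q (a, v) = a * pt g q + ∑ j, v j * px j g q := by
  have hv : (a, v) = a • ((1 : ℝ), (0 : Vec d)) + ∑ j, v j • ((0 : ℝ), (Pi.single j 1 : Vec d)) := by
    ext i
    · simp [Prod.fst_sum]
    · simp [Prod.snd_sum, Finset.sum_apply, Pi.single_apply]
  rw [hv, map_add, map_smul, map_sum]
  simp only [map_smul, smul_eq_mul, px, pt, dirD]

/-! ### First- and second-order Stein identities along affine maps -/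

theorem memLp_coord (d : ℕ) (h : ℝ) (k : Fin d) : MemLp (fun w : Vec d => w k) 2 (gaussVec d h) :=
  (memLp_id_gaussianReal' 2 (by simp)).comp_measurePreserving
    (measurePreserving_eval (fun _ : Fin d => gaussianReal 0 h.toNNReal) k)

theorem integrable_coord (d : ℕ) (h : ℝ) (k : Fin d) :
    Integrable (fun w : Vec d => w k) (gaussVec d h) :=
  (memLp_coord d h k).integrable (by norm_num)

theorem integrable_coord_mul (d : ℕ) (h : ℝ) (k l : Fin d) :
    Integrable (fun w : Vec d => w k * w l) (gaussVec d h) :=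
  (memLp_coord d h k).integrable_mul (memLp_coord d h l)

section moments

variable {d : ℕ} {g : ℝ × Vec d → ℝ}

theorem cont_aff (hg : Nice g) (s : ℝ) (b : Vec d) (S : Mat d) :
    Continuous fun w : Vec d => g (s, b + S *ᵥ w) :=
  hg.continuous.comp (by fun_prop)

theorem int0 (hg : Nice g) (h s : ℝ) (b : Vec d) (S : Mat d) :
    Integrable (fun w => g (s, b + S *ᵥ w)) (gaussVec d h) := by
  obtain ⟨C, hC⟩ := hg.bdd
  exact Integrable.of_bound (cont_aff hg s b S).aestronglyMeasurable C (ae_of_all _ fun w => hC _)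

theorem int_mul (hg : Nice g) (h s : ℝ) (b : Vec d) (S : Mat d)
    {f : Vec d → ℝ} (hf : Integrable f (gaussVec d h)) :
    Integrable (fun w => g (s, b + S *ᵥ w) * f w) (gaussVec d h) := by
  obtain ⟨C, hC⟩ := hg.bdd
  exact hf.bdd_mul (cont_aff hg s b S).aestronglyMeasurable (ae_of_all _ fun w => hC _)

theorem hasDerivAt_aff (hg : Nice g) (s : ℝ) (b : Vec d) (S : Mat d)
    (k : Fin d) (w : Vec d) (r : ℝ) :
    HasDerivAt (fun r => g (s, b + S *ᵥ update w k r))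
      (∑ j, S j k * px j g (s, b + S *ᵥ update w k r)) r := by
  have h1 : HasDerivAt (fun r => S *ᵥ update w k r) (S *ᵥ Pi.single k 1) r :=
    (LinearMap.toContinuousLinearMap (Matrix.mulVecLin S)).hasFDerivAt.comp_hasDerivAt r
      (hasDerivAt_update w k r)
  have h2 : HasDerivAt (fun r => (s, b + S *ᵥ update w k r)) ((0 : ℝ), S *ᵥ Pi.single k 1) r :=
    (hasDerivAt_const r s).prodMk (h1.const_add b)
  have h3 := (hg.differentiable (s, b + S *ᵥ update w k r)).hasFDerivAt.comp_hasDerivAt r h2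
  rw [fderiv_prod_expand] at h3
  simpa [Function.comp_def] using h3

theorem stein1 (hg : Nice g) (h s : ℝ) (b : Vec d) (S : Mat d)
    (hh : 0 < h) (k : Fin d) :
    ∫ w, g (s, b + S *ᵥ w) * w k ∂gaussVec d h
      = h * ∑ j, S j k * ∫ w, px j g (s, b + S *ᵥ w) ∂gaussVec d h := by
  have hi : ∀ j, Integrable (fun w => S j k * px j g (s, b + S *ᵥ w)) (gaussVec d h) :=
    fun j => (int0 (hg.px j) h s b S).const_mul _
  rw [stein_pi hh k (fun w => g (s, b + S *ᵥ w)) (fun w => ∑ j, S j k * px j g (s, b + S *ᵥ w))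
    (hasDerivAt_aff hg s b S k) (int0 hg h s b S) (int_mul hg h s b S (integrable_coord d h k))
    (integrable_finsetSum _ fun j _ => hi j), integral_finsetSum _ fun j _ => hi j]
  simp_rw [integral_const_mul]

/-- The second-order identity: Stein in direction `l` applied to `g * w k` produces the term
`h * δ_kl * g`, which the subtracted `h * δ_kl` cancels; `stein1` then handles the rest. -/
theorem stein2 (hg : Nice g) (h s : ℝ) (b : Vec d) (S : Mat d)
    (hh : 0 < h) (k l : Fin d) :
    ∫ w, g (s, b + S *ᵥ w) * (w k * w l - h * (1 : Mat d) k l) ∂gaussVec d h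
      = h ^ 2 * ∑ i, ∑ j, S j k * S i l * ∫ w, px j (px i g) (s, b + S *ᵥ w) ∂gaussVec d h := by
  have hi : ∀ i, Integrable (fun w => S i l * (px i g (s, b + S *ᵥ w) * w k)) (gaussVec d h) :=
    fun i => (int_mul (hg.px i) h s b S (integrable_coord d h k)).const_mul _
  have hi' := integrable_finsetSum Finset.univ fun i _ => hi i
  have hc : Integrable (fun w => g (s, b + S *ᵥ w) * (1 : Mat d) k l) (gaussVec d h) :=
    (int0 hg h s b S).mul_const _
  have hkl : Integrable (fun w => g (s, b + S *ᵥ w) * w k * w l) (gaussVec d h) :=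
    (int_mul hg h s b S (integrable_coord_mul d h k l)).congr
      (ae_of_all _ fun w => by simp only []; ring)
  have key := stein_pi hh l (fun w => g (s, b + S *ᵥ w) * w k)
    (fun w => (∑ i, S i l * (px i g (s, b + S *ᵥ w) * w k))
      + g (s, b + S *ᵥ w) * (1 : Mat d) k l)
    (fun w r => by
      have h1 := hasDerivAt_aff hg s b S l w r
      have h2 : HasDerivAt (fun r => update w l r k) ((1 : Mat d) k l) r := by
        have := (hasDerivAt_pi.1 (hasDerivAt_update w l r)) k
        simpa [Matrix.one_apply, Pi.single_apply] using this
      refine (h1.mul h2).congr_deriv ?_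
      rw [Finset.sum_mul]
      simp_rw [mul_assoc])
    (int_mul hg h s b S (integrable_coord d h k)) hkl (hi'.add hc)
  rw [integral_add hi' hc, integral_finsetSum _ fun i _ => hi i] at key
  simp_rw [integral_const_mul, stein1 (hg.px _) h s b S hh] at key
  have e : ∀ w : Vec d, g (s, b + S *ᵥ w) * (w k * w l - h * (1 : Mat d) k l)
      = g (s, b + S *ᵥ w) * w k * w l - h * (g (s, b + S *ᵥ w) * (1 : Mat d) k l) := by
    intro w; ring
  simp_rw [e]
  rw [integral_sub hkl (hc.const_mul h), key, integral_const_mul, mul_add, add_sub_cancel_right,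
    Finset.mul_sum, Finset.mul_sum]
  refine Finset.sum_congr rfl fun i _ => ?_
  rw [Finset.mul_sum, Finset.mul_sum, Finset.mul_sum, Finset.mul_sum]
  refine Finset.sum_congr rfl fun j _ => ?_
  ring

end moments

theorem Nice.const_add {d : ℕ} {g : ℝ × Vec d → ℝ} (hg : Nice g) (c : ℝ) :
    Nice fun q => c + g q := by
  refine ⟨contDiff_const.add hg.1, fun n => ?_⟩
  obtain ⟨C, hC⟩ := hg.2 n
  refine ⟨|c| + C, fun q => ?_⟩
  cases n with
  | zero =>
    have := hC q
    simp only [norm_iteratedFDeriv_zero] at this ⊢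
    exact (norm_add_le _ _).trans (by simpa using this)
  | succ n =>
    have := hC q
    rw [← norm_iteratedFDeriv_fderiv] at this ⊢
    have e : fderiv ℝ (fun q => c + g q) = fderiv ℝ g := by
      ext1 q; exact fderiv_const_add c
    rw [e]
    linarith [abs_nonneg c]

theorem px_const_add {d : ℕ} (g : ℝ × Vec d → ℝ) (c : ℝ) (j : Fin d) :
    px j (fun q => c + g q) = px j g := by
  ext q
  simp only [px, dirD]
  rw [fderiv_const_add]

/-! ### The mean along the Euler step -/

/-- The expectation of `g(t + r², X̂)`, where `X̂` is one Euler step of length `r²` from `(t, x)`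
written as `x + r² μ + r σ z` with `z` standard Gaussian. The parameter is `r = √h`, because the
expectation is differentiable in `r` up to and including `r = 0`. -/
def eulerMean {d : ℕ} (μ : ℝ → Vec d → Vec d) (σ : ℝ → Vec d → Mat d) (g : ℝ × Vec d → ℝ)
    (p : ℝ × Vec d × ℝ) : ℝ :=
  ∫ z, g (p.1 + p.2.2 ^ 2,
    (p.2.1 + p.2.2 ^ 2 • μ p.1 p.2.1) + (p.2.2 • σ p.1 p.2.1) *ᵥ z) ∂gaussVec d 1

section scheme

variable {d : ℕ} {μ : ℝ → Vec d → Vec d} {σ : ℝ → Vec d → Mat d} {g : ℝ × Vec d → ℝ}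

theorem eulerMean_continuous (hμ : Continuous fun q : ℝ × Vec d => μ q.1 q.2)
    (hσ : Continuous fun q : ℝ × Vec d => σ q.1 q.2) (hg : Nice g) : Continuous (eulerMean μ σ g) := by
  obtain ⟨C, hC⟩ := hg.bdd
  refine continuous_of_dominated (bound := fun _ => C) (fun p => ?_)
    (fun p => ae_of_all _ fun z => hC _) (integrable_const _) (ae_of_all _ fun z => ?_)
  · exact (cont_aff hg _ _ _).aestronglyMeasurable
  · have h1 : Continuous fun p : ℝ × Vec d × ℝ => μ p.1 p.2.1 :=
      hμ.comp (f := fun p : ℝ × Vec d × ℝ => (p.1, p.2.1)) (by fun_prop)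
    have h2 : Continuous fun p : ℝ × Vec d × ℝ => σ p.1 p.2.1 :=
      hσ.comp (f := fun p : ℝ × Vec d × ℝ => (p.1, p.2.1)) (by fun_prop)
    have h3 : Continuous fun p : ℝ × Vec d × ℝ => (p.2.2 • σ p.1 p.2.1) *ᵥ z :=
      Continuous.matrix_mulVec (by fun_prop) continuous_const
    exact hg.continuous.comp (by fun_prop)

theorem eulerMean_zero (t : ℝ) (x : Vec d) : eulerMean μ σ g (t, x, 0) = g (t, x) := by
  simp [eulerMean]

/-- Brownian scaling. -/
theorem gaussVec_eq_map {h : ℝ} (hh : 0 < h) :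
    gaussVec d h = (gaussVec d 1).map fun z => √h • z := by
  have e : (fun z : Vec d => √h • z) = fun z i => (fun y => √h * y) (z i) := by
    ext z i; simp
  unfold gaussVec
  rw [e, Measure.pi_map_pi (by fun_prop)]
  congr 1
  ext1 i
  rw [gaussianReal_map_const_mul]
  congr 1
  · simp
  · ext
    simp [hh.le]

theorem integral_eq_eulerMean {h : ℝ} (hh : 0 < h) (hg : Nice g) (t : ℝ) (x : Vec d) :
    ∫ w, g (t + h, (x + h • μ t x) + σ t x *ᵥ w) ∂gaussVec d h = eulerMean μ σ g (t, x, √h) := by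
  rw [gaussVec_eq_map hh, integral_map (by fun_prop) (cont_aff hg _ _ _).aestronglyMeasurable]
  simp only [eulerMean, Real.sq_sqrt hh.le, Matrix.smul_mulVec, Matrix.mulVec_smul]

/-- The Gaussian average of the Dynkin operator with coefficients frozen at `(t, x)`. -/
def dynkinMean (μ : ℝ → Vec d → Vec d) (σ : ℝ → Vec d → Mat d) (g : ℝ × Vec d → ℝ)
    (p : ℝ × Vec d × ℝ) : ℝ :=
  eulerMean μ σ (pt g) p + ∑ i, μ p.1 p.2.1 i * eulerMean μ σ (px i g) p
    + (1 / 2) * ∑ i, ∑ j, (σ p.1 p.2.1 * (σ p.1 p.2.1)ᵀ) i j * eulerMean μ σ (px j (px i g)) p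

theorem dynkinMean_continuous (hμ : Continuous fun q : ℝ × Vec d => μ q.1 q.2)
    (hσ : Continuous fun q : ℝ × Vec d => σ q.1 q.2) (hg : Nice g) : Continuous (dynkinMean μ σ g) := by
  have h1 : Continuous fun p : ℝ × Vec d × ℝ => μ p.1 p.2.1 :=
    hμ.comp (f := fun p : ℝ × Vec d × ℝ => (p.1, p.2.1)) (by fun_prop)
  have h2 : Continuous fun p : ℝ × Vec d × ℝ => σ p.1 p.2.1 :=
    hσ.comp (f := fun p : ℝ × Vec d × ℝ => (p.1, p.2.1)) (by fun_prop)
  have h3 : Continuous fun p : ℝ × Vec d × ℝ => σ p.1 p.2.1 * (σ p.1 p.2.1)ᵀ :=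
    h2.matrix_mul h2.matrix_transpose
  refine ((eulerMean_continuous hμ hσ hg.pt).add ?_).add (continuous_const.mul ?_)
  · exact continuous_finsetSum _ fun i _ =>
      ((continuous_apply i).comp h1).mul (eulerMean_continuous hμ hσ (hg.px i))
  · exact continuous_finsetSum _ fun i _ => continuous_finsetSum _ fun j _ =>
      (h3.matrix_elem i j).mul (eulerMean_continuous hμ hσ ((hg.px i).px j))

/-- A form of Dynkin's formula. Differentiation under the integral leaves the term
`E[Dg · σ z]`, which `stein1` turns into `r E[Tr(σσᵀ D²g)]`. -/
theorem eulerMean_hasDerivAt (hg : Nice g) (t : ℝ) (x : Vec d) (r : ℝ) :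
    HasDerivAt (fun r => eulerMean μ σ g (t, x, r)) (2 * r * dynkinMean μ σ g (t, x, r)) r := by
  obtain ⟨C, hC⟩ := hg.fderiv_bdd
  have hC0 : 0 ≤ C := (norm_nonneg _).trans (hC 0)
  set m := μ t x with hm
  set S := σ t x with hS
  let q : ℝ → Vec d → ℝ × Vec d := fun r z => (t + r ^ 2, (x + r ^ 2 • m) + (r • S) *ᵥ z)
  let q' : ℝ → Vec d → ℝ × Vec d := fun r z => (2 * r, (2 * r) • m + S *ᵥ z)
  have hq : ∀ r z, HasDerivAt (fun r => q r z) (q' r z) r := by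
    intro r z
    have h1 : HasDerivAt (fun r : ℝ => r ^ 2) (2 * r) r := by simpa using hasDerivAt_pow 2 r
    have h2 : HasDerivAt (fun r : ℝ => (r • S) *ᵥ z) (S *ᵥ z) r := by
      simp_rw [Matrix.smul_mulVec]
      simpa using (hasDerivAt_id r).smul_const (S *ᵥ z)
    exact (h1.const_add t).prodMk (((h1.smul_const m).const_add x).add h2)
  have hSz : ∀ j, Integrable (fun z : Vec d => (S *ᵥ z) j) (gaussVec d 1) := fun j =>
    integrable_finsetSum Finset.univ fun k _ => (integrable_coord d 1 k).const_mul (S j k)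
  have main := hasDerivAt_integral_of_dominated_loc_of_deriv_le (μ := gaussVec d 1)
    (F := fun r z => g (q r z)) (F' := fun r z => fderiv ℝ g (q r z) (q' r z))
    (bound := fun z => C * (2 * (|r| + 1) + (2 * (|r| + 1) * ‖m‖ + ∑ j, |(S *ᵥ z) j|)))
    (x₀ := r) (Metric.ball_mem_nhds r one_pos)
    (Filter.Eventually.of_forall fun r => (cont_aff hg _ _ _).aestronglyMeasurable)
    (int0 hg 1 _ _ _)
    (by
      have : Continuous fun z => fderiv ℝ g (q r z) (q' r z) := by
        have hc := hg.1.continuous_fderiv (by simp)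
        have hqc : Continuous (q r) := by fun_prop
        have hqc' : Continuous (q' r) := by fun_prop
        exact (hc.comp hqc).clm_apply hqc'
      exact this.aestronglyMeasurable)
    (ae_of_all _ fun z r' hr' => by
      have hr1 : |r'| ≤ |r| + 1 := by
        have := abs_sub_abs_le_abs_sub r' r
        rw [Metric.mem_ball, Real.dist_eq] at hr'
        linarith
      have h2r : ‖2 * r'‖ ≤ 2 * (|r| + 1) := by
        rw [Real.norm_eq_abs, abs_mul, abs_two]; linarith
      refine (ContinuousLinearMap.le_opNorm _ _).trans ?_
      refine mul_le_mul (hC _) ?_ (norm_nonneg _) hC0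
      have hs : ‖S *ᵥ z‖ ≤ ∑ j, |(S *ᵥ z) j| := by
        refine (pi_norm_le_iff_of_nonneg (Finset.sum_nonneg fun _ _ => abs_nonneg _)).2 fun j => ?_
        exact Finset.single_le_sum (f := fun j => |(S *ᵥ z) j|) (fun _ _ => abs_nonneg _)
          (Finset.mem_univ j)
      have h2 : ‖(2 * r') • m + S *ᵥ z‖ ≤ 2 * (|r| + 1) * ‖m‖ + ∑ j, |(S *ᵥ z) j| := by
        refine (norm_add_le _ _).trans (add_le_add ?_ hs)
        rw [norm_smul]
        gcongr
      refine (Prod.norm_def (q' r' z)).le.trans (max_le ?_ ?_)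
      · have : 0 ≤ 2 * (|r| + 1) * ‖m‖ + ∑ j, |(S *ᵥ z) j| := (norm_nonneg _).trans h2
        exact h2r.trans (by linarith)
      · have : 0 ≤ 2 * (|r| + 1) := by positivity
        exact h2.trans (by linarith))
    (((integrable_const _).add ((integrable_const _).add
      (integrable_finsetSum _ fun j _ => (hSz j).abs))).const_mul C)
    (ae_of_all _ fun z r' _ =>
      (hg.differentiable (q r' z)).hasFDerivAt.comp_hasDerivAt r' (hq r' z))
  refine main.2.congr_deriv ?_
  have i1 : Integrable (fun z => 2 * r * pt g (q r z)) (gaussVec d 1) :=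
    (int0 hg.pt 1 _ _ _).const_mul _
  have i2 : ∀ j, Integrable (fun z => 2 * r * m j * px j g (q r z)) (gaussVec d 1) := fun j =>
    (int0 (hg.px j) 1 _ _ _).const_mul _
  have i3 : ∀ j k, Integrable (fun z : Vec d => S j k * (px j g (q r z) * z k)) (gaussVec d 1) :=
    fun j k => (int_mul (hg.px j) 1 _ _ _ (integrable_coord d 1 k)).const_mul _
  have e : ∀ z, fderiv ℝ g (q r z) (q' r z) = 2 * r * pt g (q r z)
      + ((∑ j, 2 * r * m j * px j g (q r z)) + ∑ j, ∑ k, S j k * (px j g (q r z) * z k)) := by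
    intro z
    simp only [q', fderiv_prod_expand]
    rw [← Finset.sum_add_distrib]
    congr 1
    refine Finset.sum_congr rfl fun j _ => ?_
    simp only [Pi.add_apply, Pi.smul_apply, smul_eq_mul, add_mul, Matrix.mulVec, dotProduct,
      Finset.sum_mul]
    congr 1
    refine Finset.sum_congr rfl fun k _ => ?_
    ring
  simp_rw [e]
  have i2' := integrable_finsetSum Finset.univ fun j _ => i2 j
  have i3' := integrable_finsetSum Finset.univ fun j _ =>
    integrable_finsetSum Finset.univ fun k _ => i3 j k
  have i23 : Integrable (fun z => (∑ j, 2 * r * m j * px j g (q r z))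
      + ∑ j, ∑ k, S j k * (px j g (q r z) * z k)) (gaussVec d 1) := i2'.add i3'
  rw [integral_add i1 i23, integral_add i2' i3', integral_finsetSum _ (fun j _ => i2 j),
    integral_finsetSum _ (fun j _ => integrable_finsetSum _ fun k _ => i3 j k)]
  simp_rw [integral_finsetSum _ (fun k _ => i3 _ k), integral_const_mul]
  have st : ∀ j k, ∫ z, px j g (q r z) * z k ∂gaussVec d 1
      = ∑ l, r * S l k * eulerMean μ σ (px l (px j g)) (t, x, r) := by
    intro j k
    have := stein1 (hg.px j) 1 (t + r ^ 2) (x + r ^ 2 • m) (r • S) one_pos k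
    rw [one_mul] at this
    exact this
  simp_rw [st]
  have j1 : ∫ z, pt g (q r z) ∂gaussVec d 1 = eulerMean μ σ (pt g) (t, x, r) := rfl
  have j2 : ∀ j, ∫ z, px j g (q r z) ∂gaussVec d 1 = eulerMean μ σ (px j g) (t, x, r) := fun _ => rfl
  simp_rw [j1, j2, dynkinMean, ← hm, ← hS]
  rw [mul_add, mul_add, add_assoc]
  congr 2
  · rw [Finset.mul_sum]
    exact Finset.sum_congr rfl fun j _ => by ring
  · rw [← mul_assoc, Finset.mul_sum]
    refine Finset.sum_congr rfl fun j _ => ?_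
    simp_rw [Finset.mul_sum, Matrix.mul_apply, Matrix.transpose_apply, Finset.sum_mul,
      Finset.mul_sum]
    rw [Finset.sum_comm]
    refine Finset.sum_congr rfl fun l _ => Finset.sum_congr rfl fun k _ => ?_
    ring

/-- Cauchy's mean value theorem applied to the mean as a function of `r` and to `r ↦ r²`. -/
theorem eulerMean_slope (hg : Nice g) (t : ℝ) (x : Vec d) {h : ℝ} (hh : 0 < h) :
    ∃ ξ ∈ Ioo 0 √h, (eulerMean μ σ g (t, x, √h) - g (t, x)) / h = dynkinMean μ σ g (t, x, ξ) := by
  have hs : 0 < √h := Real.sqrt_pos.2 hh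
  have hd := eulerMean_hasDerivAt (μ := μ) (σ := σ) hg t x
  have hsq : ∀ r : ℝ, HasDerivAt (fun r : ℝ => r ^ 2) (2 * r) r := fun r => by
    simpa using hasDerivAt_pow 2 r
  obtain ⟨ξ, hξ, he⟩ := exists_ratio_hasDerivAt_eq_ratio_slope
    (fun r => eulerMean μ σ g (t, x, r)) (fun r => 2 * r * dynkinMean μ σ g (t, x, r)) hs
    (fun r _ => (hd r).continuousAt.continuousWithinAt) (fun r _ => hd r)
    (fun r : ℝ => r ^ 2) (fun r => 2 * r)
    (fun r _ => (hsq r).continuousAt.continuousWithinAt) (fun r _ => hsq r)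
  refine ⟨ξ, hξ, ?_⟩
  rw [eulerMean_zero, Real.sq_sqrt hh.le] at he
  have hξ0 : ξ ≠ 0 := hξ.1.ne'
  rw [div_eq_iff hh.ne']
  have : (2 * ξ) * (eulerMean μ σ g (t, x, √h) - g (t, x)) = (2 * ξ) * (dynkinMean μ σ g (t, x, ξ) * h) := by
    linear_combination -he
  exact mul_left_cancel₀ (by simpa using hξ0) this


/-! ### The weights compute derivatives -/

/-- Exact identity `E[g(X̂) H₁] = E[Dg(X̂)]`: Stein produces a factor `h σᵀ`, which the weight
inverts. -/
theorem integral_H1w (hg : Nice g) {h : ℝ} (hh : 0 < h) (t : ℝ) (x : Vec d)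
    (hS : IsUnit (σ t x).det) (i : Fin d) :
    ∫ w, g (t + h, euler μ σ h t x w) * H1w σ h t x w i ∂gaussVec d h
      = eulerMean μ σ (px i g) (t, x, √h) := by
  rw [← integral_eq_eulerMean hh (hg.px i)]
  simp only [euler, H1w]
  set S := σ t x with hSdef
  set b := x + h • μ t x
  have hI : Sᵀ⁻¹ * Sᵀ = 1 := Matrix.nonsing_inv_mul _ (by rwa [Matrix.det_transpose])
  have e : ∀ w : Vec d, g (t + h, b + S *ᵥ w) * ((1 / h) • Sᵀ⁻¹ *ᵥ w) i
      = ∑ k, (1 / h * Sᵀ⁻¹ i k) * (g (t + h, b + S *ᵥ w) * w k) := by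
    intro w
    simp only [Pi.smul_apply, smul_eq_mul, Matrix.mulVec, dotProduct, Finset.mul_sum]
    exact Finset.sum_congr rfl fun k _ => by ring
  simp_rw [e]
  rw [integral_finsetSum _ fun k _ =>
    (int_mul hg h (t + h) b S (integrable_coord d h k)).const_mul _]
  simp_rw [integral_const_mul, stein1 hg h (t + h) b S hh]
  set X : Fin d → ℝ := fun j => ∫ w, px j g (t + h, b + S *ᵥ w) ∂gaussVec d h with hX
  have e2 : ∀ k, 1 / h * Sᵀ⁻¹ i k * (h * ∑ j, S j k * X j) = Sᵀ⁻¹ i k * (Sᵀ *ᵥ X) k := by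
    intro k
    simp only [Matrix.mulVec, dotProduct, Matrix.transpose_apply]
    field_simp
  calc ∑ k, 1 / h * Sᵀ⁻¹ i k * (h * ∑ j, S j k * X j)
      = (Sᵀ⁻¹ *ᵥ (Sᵀ *ᵥ X)) i := Finset.sum_congr rfl fun k _ => e2 k
    _ = X i := by rw [Matrix.mulVec_mulVec, hI, Matrix.one_mulVec]

/-- Exact identity `E[g(X̂) H₂] = E[D²g(X̂)]`: `stein2` produces `h² σᵀ E[D²g] σ`, which the weight
inverts. -/
theorem integral_H2w (hg : Nice g) {h : ℝ} (hh : 0 < h) (t : ℝ) (x : Vec d)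
    (hS : IsUnit (σ t x).det) (i j : Fin d) :
    ∫ w, g (t + h, euler μ σ h t x w) * H2w σ h t x w i j ∂gaussVec d h
      = eulerMean μ σ (px i (px j g)) (t, x, √h) := by
  rw [← integral_eq_eulerMean hh ((hg.px j).px i)]
  simp only [euler, H2w]
  set S := σ t x with hSdef
  set b := x + h • μ t x
  have hI : Sᵀ⁻¹ * Sᵀ = 1 := Matrix.nonsing_inv_mul _ (by rwa [Matrix.det_transpose])
  have hI' : S * S⁻¹ = 1 := Matrix.mul_nonsing_inv _ hS
  have e : ∀ w : Vec d, g (t + h, b + S *ᵥ w)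
        * ((1 / h ^ 2) • (Sᵀ⁻¹ * (vecMulVec w w - h • (1 : Mat d)) * S⁻¹)) i j
      = ∑ l, ∑ k, (1 / h ^ 2 * Sᵀ⁻¹ i k * S⁻¹ l j)
        * (g (t + h, b + S *ᵥ w) * (w k * w l - h * (1 : Mat d) k l)) := by
    intro w
    simp only [Matrix.smul_apply, smul_eq_mul, Matrix.mul_apply, Finset.mul_sum, Finset.sum_mul,
      Matrix.sub_apply, vecMulVec_apply]
    exact Finset.sum_congr rfl fun l _ => Finset.sum_congr rfl fun k _ => by ring
  have hi : ∀ k l, Integrable (fun w : Vec d => (1 / h ^ 2 * Sᵀ⁻¹ i k * S⁻¹ l j)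
        * (g (t + h, b + S *ᵥ w) * (w k * w l - h * (1 : Mat d) k l))) (gaussVec d h) :=
    fun k l => (int_mul hg h (t + h) b S
      ((integrable_coord_mul d h k l).sub (integrable_const _))).const_mul _
  simp_rw [e]
  rw [integral_finsetSum _ fun l _ => integrable_finsetSum _ fun k _ => hi k l]
  simp_rw [integral_finsetSum _ (fun k _ => hi k _), integral_const_mul,
    stein2 hg h (t + h) b S hh]
  set X : Mat d := Matrix.of fun j i => ∫ w, px j (px i g) (t + h, b + S *ᵥ w) ∂gaussVec d h
    with hX
  have hXe : ∀ a c, ∫ w, px a (px c g) (t + h, b + S *ᵥ w) ∂gaussVec d h = X a c := fun _ _ => rfl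
  simp_rw [hXe]
  have e2 : ∀ k l, 1 / h ^ 2 * Sᵀ⁻¹ i k * S⁻¹ l j * (h ^ 2 * ∑ c, ∑ a, S a k * S c l * X a c)
      = Sᵀ⁻¹ i k * (Sᵀ * X * S) k l * S⁻¹ l j := by
    intro k l
    simp only [Matrix.mul_apply, Matrix.transpose_apply, Finset.sum_mul]
    have : ∑ c, ∑ a, S a k * S c l * X a c = ∑ c, ∑ a, S a k * X a c * S c l :=
      Finset.sum_congr rfl fun c _ => Finset.sum_congr rfl fun a _ => by ring
    rw [this]
    field_simp
  simp_rw [e2]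
  have e3 : X = Sᵀ⁻¹ * (Sᵀ * X * S) * S⁻¹ := by
    calc X = (Sᵀ⁻¹ * Sᵀ) * X * (S * S⁻¹) := by rw [hI, hI', Matrix.one_mul, Matrix.mul_one]
      _ = _ := by simp only [Matrix.mul_assoc]
  conv_rhs => rw [e3]
  simp only [Matrix.mul_apply (N := S⁻¹), Matrix.mul_apply (M := Sᵀ⁻¹), Finset.sum_mul]

end scheme

/-! ### Identification with the gradient, the Hessian and the Dynkin operator -/

section identification

variable {d : ℕ} {φ : ℝ → Vec d → ℝ}

theorem fderiv_slice {g : ℝ × Vec d → ℝ} (hg : Nice g) (t : ℝ) (y : Vec d) (j : Fin d) :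
    fderiv ℝ (fun y => g (t, y)) y (Pi.single j 1) = px j g (t, y) := by
  have h1 : HasFDerivAt (fun y : Vec d => (t, y)) (ContinuousLinearMap.inr ℝ ℝ (Vec d)) y :=
    hasFDerivAt_prodMk_right t y
  have := ((hg.differentiable (t, y)).hasFDerivAt.comp y h1).fderiv
  simp only [Function.comp_def] at this
  rw [this]
  simp [px, dirD]

theorem gradx_eq (hφ : Nice fun q : ℝ × Vec d => φ q.1 q.2) (t : ℝ) (x : Vec d) (i : Fin d) :
    gradx φ t x i = px i (fun q : ℝ × Vec d => φ q.1 q.2) (t, x) :=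
  fderiv_slice hφ t x i

theorem hessx_eq (hφ : Nice fun q : ℝ × Vec d => φ q.1 q.2) (t : ℝ) (x : Vec d) (i j : Fin d) :
    hessx φ t x i j = px i (px j fun q : ℝ × Vec d => φ q.1 q.2) (t, x) := by
  rw [← fderiv_slice (hφ.px j) t x i]
  have : (fun y => fderiv ℝ (φ t) y (Pi.single j 1))
      = fun y => px j (fun q : ℝ × Vec d => φ q.1 q.2) (t, y) :=
    funext fun y => fderiv_slice hφ t y j
  simp only [hessx, Matrix.of_apply, this]

theorem LX_eq (hφ : Nice fun q : ℝ × Vec d => φ q.1 q.2) (μ : ℝ → Vec d → Vec d)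
    (σ : ℝ → Vec d → Mat d) (t : ℝ) (x : Vec d) :
    LX μ σ φ t x = dynkinMean μ σ (fun q : ℝ × Vec d => φ q.1 q.2) (t, x, 0) := by
  have h1 : HasDerivAt (fun s : ℝ => (s, x)) ((1 : ℝ), (0 : Vec d)) t :=
    (hasDerivAt_id t).prodMk (hasDerivAt_const t x)
  have h2 := ((hφ.differentiable (t, x)).hasFDerivAt.comp_hasDerivAt t h1).deriv
  simp only [Function.comp_def] at h2
  simp only [LX, dynkinMean, eulerMean_zero, h2, dotProduct, gradx_eq hφ, Matrix.trace,
    Matrix.diag_apply, Matrix.mul_apply (N := hessx φ t x), hessx_eq hφ, pt, dirD]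

end identification

/-- Consistency of the scheme: for a smooth bounded test function `φ` with bounded
derivatives, `([c+φ](t',x') − T_h[c+φ](t',x'))/h → −(𝓛^X φ + F(·, φ, Dφ, D²φ))(t,x)`
as `(t',x') → (t,x)`, `h ↓ 0`, `c → 0` with `t' + h ≤ T`. -/
theorem scheme_consistency
    (d : ℕ) (T : ℝ) (hT : 0 < T)
    (μ : ℝ → Vec d → Vec d) (σ : ℝ → Vec d → Mat d)
    (hμcont : Continuous fun q : ℝ × Vec d => μ q.1 q.2)
    (hσcont : Continuous fun q : ℝ × Vec d => σ q.1 q.2)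
    (hμbdd : ∃ C : ℝ, ∀ s y, ‖μ s y‖ ≤ C)
    (hσbdd : ∃ C : ℝ, ∀ s y, ‖σ s y‖ ≤ C)
    (hσinv : ∀ s y, IsUnit (σ s y).det)
    (F : ℝ → Vec d → ℝ → Vec d → Mat d → ℝ)
    (hFcont : Continuous fun q : ℝ × Vec d × ℝ × Vec d × Mat d =>
      F q.1 q.2.1 q.2.2.1 q.2.2.2.1 q.2.2.2.2)
    (hFlip : ∃ L : ℝ, 0 ≤ L ∧ ∀ t x r r' p p' γ γ',
      |F t x r p γ - F t x r' p' γ'| ≤ L * (|r - r'| + ‖p - p'‖ + ‖γ - γ'‖))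
    (φ : ℝ → Vec d → ℝ) (hφ : ContDiff ℝ (⊤ : ℕ∞) fun q : ℝ × Vec d => φ q.1 q.2)
    (hφbdd : ∀ n : ℕ, ∃ C : ℝ, ∀ q : ℝ × Vec d,
      ‖iteratedFDeriv ℝ n (fun q : ℝ × Vec d => φ q.1 q.2) q‖ ≤ C)
    (t : ℝ) (x : Vec d) (ht : 0 ≤ t) (htT : t < T) :
    ∀ ε > 0, ∃ δ > 0, ∀ (t' : ℝ) (x' : Vec d) (h c : ℝ),
      |t' - t| < δ → ‖x' - x‖ < δ → 0 < h → h < δ → |c| < δ →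
      0 ≤ t' → t' + h ≤ T →
      |((c + φ t' x') - Th F μ σ (fun s y => c + φ s y) h t' x') / h
          - (-(LX μ σ φ t x + F t x (φ t x) (gradx φ t x) (hessx φ t x)))| < ε := by
  intro ε hε
  have hN : Nice fun q : ℝ × Vec d => φ q.1 q.2 := ⟨hφ, hφbdd⟩
  set g : ℝ × Vec d → ℝ := fun q => φ q.1 q.2 with hg
  -- The `F` term of the scheme as a function of `((t', x', √h), c)`.
  let A : (ℝ × Vec d × ℝ) × ℝ → ℝ := fun p =>
    F p.1.1 p.1.2.1 (p.2 + eulerMean μ σ g p.1) (fun i => eulerMean μ σ (px i g) p.1)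
      (Matrix.of fun i j => eulerMean μ σ (px i (px j g)) p.1)
  have hA : Continuous A := by
    have h1 : Continuous fun p : (ℝ × Vec d × ℝ) × ℝ => p.2 + eulerMean μ σ g p.1 :=
      continuous_snd.add ((eulerMean_continuous hμcont hσcont hN).comp continuous_fst)
    have h2 : Continuous fun (p : (ℝ × Vec d × ℝ) × ℝ) (i : Fin d) => eulerMean μ σ (px i g) p.1 :=
      continuous_pi fun i => (eulerMean_continuous hμcont hσcont (hN.px i)).comp continuous_fst
    have h3 : Continuous fun p : (ℝ × Vec d × ℝ) × ℝ =>
        (Matrix.of fun i j => eulerMean μ σ (px i (px j g)) p.1 : Mat d) :=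
      continuous_matrix fun i j =>
        (eulerMean_continuous hμcont hσcont ((hN.px j).px i)).comp continuous_fst
    exact hFcont.comp ((continuous_fst.comp continuous_fst).prodMk
      ((continuous_fst.comp (continuous_snd.comp continuous_fst)).prodMk
        (h1.prodMk (h2.prodMk h3))))
  obtain ⟨δ₁, hδ₁, H₁⟩ := Metric.continuous_iff.1 (dynkinMean_continuous hμcont hσcont hN)
    (t, x, 0) (ε / 2) (by positivity)
  obtain ⟨δ₂, hδ₂, H₂⟩ := Metric.continuous_iff.1 hA ((t, x, 0), 0) (ε / 2) (by positivity)
  set δ := min δ₁ δ₂ with hδ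
  have hδ0 : 0 < δ := lt_min hδ₁ hδ₂
  -- The bound `δ ^ 2` on `h` turns into a bound `δ` on `√h`.
  refine ⟨min δ (δ ^ 2), lt_min hδ0 (by positivity), ?_⟩
  intro t' x' h c ht' hx' hh hhδ hc _ _
  have hsq : √h < δ := by
    rw [Real.sqrt_lt' hδ0]; exact hhδ.trans_le (min_le_right _ _)
  have hclose : ∀ r : ℝ, |r| < δ → dist ((t', x', r) : ℝ × Vec d × ℝ) (t, x, 0) < δ := by
    intro r hr
    rw [Prod.dist_eq, Prod.dist_eq, dist_eq_norm x' x, Real.dist_eq, Real.dist_eq, sub_zero]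
    exact max_lt (ht'.trans_le (min_le_left _ _)) (max_lt (hx'.trans_le (min_le_left _ _)) hr)
  obtain ⟨ξ, hξ, hslope⟩ := eulerMean_slope (μ := μ) (σ := σ) hN t' x' hh
  have B₁ := H₁ (t', x', ξ) ((hclose ξ (by rw [abs_of_pos hξ.1]; exact hξ.2.trans hsq)).trans_le
    (min_le_left _ _))
  have B₂ := H₂ ((t', x', √h), c) (by
    refine lt_of_lt_of_le ?_ (min_le_right δ₁ δ₂)
    rw [Prod.dist_eq]
    refine max_lt (hclose _ (by rwa [abs_of_nonneg (Real.sqrt_nonneg h)])) ?_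
    rw [Real.dist_eq, sub_zero]
    exact hc.trans_le (min_le_left _ _))
  have hA0 : A ((t, x, 0), 0) = F t x (φ t x) (gradx φ t x) (hessx φ t x) := by
    have e1 : (fun i => px i g (t, x)) = gradx φ t x := funext fun i => (gradx_eq hN t x i).symm
    have e2 : (Matrix.of fun i j => px i (px j g) (t, x)) = hessx φ t x := by
      ext i j; exact (hessx_eq hN t x i j).symm
    simp only [A, eulerMean_zero, zero_add, e1, e2]
    rfl
  have hE : ∫ w, (c + φ (t' + h) (euler μ σ h t' x' w)) ∂gaussVec d h
      = c + eulerMean μ σ g (t', x', √h) := by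
    rw [← integral_eq_eulerMean hh hN]
    have := integral_add (integrable_const c)
      (int0 hN h (t' + h) (x' + h • μ t' x') (σ t' x'))
    rw [integral_const, probReal_univ, one_smul] at this
    exact this
  have hTh : Th F μ σ (fun s y => c + φ s y) h t' x'
      = c + eulerMean μ σ g (t', x', √h) + h * A ((t', x', √h), c) := by
    have e1 : ∀ i, ∫ w, (c + φ (t' + h) (euler μ σ h t' x' w)) * H1w σ h t' x' w i ∂gaussVec d h
        = eulerMean μ σ (px i g) (t', x', √h) := fun i => by
      rw [← px_const_add g c i]
      exact integral_H1w (hN.const_add c) hh t' x' (hσinv _ _) i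
    have e2 : ∀ i j,
        ∫ w, (c + φ (t' + h) (euler μ σ h t' x' w)) * H2w σ h t' x' w i j ∂gaussVec d h
        = eulerMean μ σ (px i (px j g)) (t', x', √h) := fun i j => by
      rw [← px_const_add g c j]
      exact integral_H2w (hN.const_add c) hh t' x' (hσinv _ _) i j
    simp only [Th, step, hE, e1, e2, A]
  rw [hTh, LX_eq hN, ← hA0]
  have hq : (c + φ t' x' - (c + eulerMean μ σ g (t', x', √h) + h * A ((t', x', √h), c))) / h
      = -(dynkinMean μ σ g (t', x', ξ) + A ((t', x', √h), c)) := by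
    rw [← hslope]
    simp only [hg]
    field_simp
    ring
  rw [hq]
  rw [Real.dist_eq] at B₁ B₂
  rw [abs_lt] at B₁ B₂ ⊢
  constructor <;> linarith [B₁.1, B₁.2, B₂.1, B₂.2]

end
end

section
/- Let d = 1. Assume F satisfies Assumption F, that μ and σ are bounded, Lipschitz in x uniformly in t and (1/2)-Hölder continuous in t uniformly in x, and that σ(t,x) ≥ σ₀ for some constant σ₀ > 0. If g : ℝ → ℝ is bounded and Lipschitz, then the functions x ↦ v^h(t_i, x) are Lipschitz with a Lipschitz constant that is independent of h = T/n and of i ∈ {0,…,n}. -/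
/-!
One step of the scheme maps an `L`-Lipschitz function to an `((1 + Ch) L + Mh)`-Lipschitz function
with `C`, `M` independent of `h` and `t`; iterating `n - i ≤ T/h` times gives the uniform constant
`exp(CT) (Lg + MT)` (`schemeAux1_lip`).

For the one-step estimate (`step1_lip_local`), the mean value theorem for `F` in `(r, p, γ)` writes
the difference of the step at `x` and `x'`, up to `M h |x - x'|`, as the difference of
`E[ψ(m + sW) wt(s, W)]` at the parameters `(m, s) = (x + μh, σ)` and `(m', s') = (x' + μ'h, σ')`,
for one and the same quadratic weight `wt` with coefficients `1 + h F_r`, `F_p`, `F_γ / h`.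
Differentiating along the segment between the parameters and integrating by parts against the
Gaussian law moves the derivatives onto `ψ` and produces `E[ψ' (m + sW) kern(W)]`
(`hasDerivAt_expect`), so that the difference is at most `L` times the `L¹` norm of `kern`
(`lip_duality`, where Lipschitz functions are approximated by `C¹` ones).

The point is that this norm is `|x - x'| (1 + O(h))` and not merely `|x - x'| (1 + O(√h))`
(`kern_L1_bound`). After division by `x - x'` the kernel is
`(1 + bh + cw) (wt - 2cαw)` up to terms of `L¹` norm `O(h)`, with `α = F_γ / s²`, and the second
factor is at least `-κh`: complete the square, using `α ≤ 1 + O(h)` and `F_p² ≤ 4 K F_γ`, which is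
the lower bound on `F_p w + F_γ w²`. Hence absolute values can be removed at cost `O(h)`, and the
first-order terms integrate to `O(h)`. The bound `α ≤ 1 + O(h)` compares `σ(t,x)` with a value of
`s` between `σ(t,x)` and `σ(t,x')`, so it needs `|x - x'| ≤ h`; chaining (`lip_of_local`) removes
this restriction.
-/

open MeasureTheory ProbabilityTheory Real Set

noncomputable section

/-- Law of the scalar Gaussian `W_h`, centered with variance `h`. -/
def gauss1 (h : ℝ) : Measure ℝ := gaussianReal 0 h.toNNReal

/-- One step Euler scheme in dimension one: `X̂_h^{t,x} = x + μ(t,x) h + σ(t,x) W_h`. -/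
def euler1 (μ σ : ℝ → ℝ → ℝ) (h t x w : ℝ) : ℝ :=
  x + μ t x * h + σ t x * w

/-- Weight `H_1^h(t,x) = W_h/(σ(t,x) h)`. -/
def H1s (σ : ℝ → ℝ → ℝ) (h t x w : ℝ) : ℝ := w / (σ t x * h)

/-- Weight `H_2^h(t,x) = (W_h² − h)/(σ(t,x)² h²)`. -/
def H2s (σ : ℝ → ℝ → ℝ) (h t x w : ℝ) : ℝ := (w ^ 2 - h) / (σ t x ^ 2 * h ^ 2)

/-- One-step operator acting on the next-time function `ψ`. -/
def step1 (F : ℝ → ℝ → ℝ → ℝ → ℝ → ℝ) (μ σ : ℝ → ℝ → ℝ)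
    (h t : ℝ) (ψ : ℝ → ℝ) (x : ℝ) : ℝ :=
  (∫ w, ψ (euler1 μ σ h t x w) ∂gauss1 h)
    + h * F t x (∫ w, ψ (euler1 μ σ h t x w) ∂gauss1 h)
        (∫ w, ψ (euler1 μ σ h t x w) * H1s σ h t x w ∂gauss1 h)
        (∫ w, ψ (euler1 μ σ h t x w) * H2s σ h t x w ∂gauss1 h)

/-- Backward scheme with `k` steps remaining before the horizon `T`. -/
def schemeAux1 (T : ℝ) (F : ℝ → ℝ → ℝ → ℝ → ℝ → ℝ) (μ σ : ℝ → ℝ → ℝ)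
    (g : ℝ → ℝ) (n : ℕ) : ℕ → ℝ → ℝ
  | 0 => g
  | (k + 1) => step1 F μ σ (T / n) (T - (k + 1) * (T / n)) (schemeAux1 T F μ σ g n k)

/-- The discrete time approximation `v^h(t_i, ·)` with `h = T/n`, `t_i = i·T/n`. -/
def vh1 (T : ℝ) (F : ℝ → ℝ → ℝ → ℝ → ℝ → ℝ) (μ σ : ℝ → ℝ → ℝ)
    (g : ℝ → ℝ) (n i : ℕ) : ℝ → ℝ :=
  schemeAux1 T F μ σ g n (n - i)

/-- Scalar version of Assumption F, with explicit partial derivatives `Fr, Fp, Fγ`. -/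
structure AssumptionF1 (σ : ℝ → ℝ → ℝ) (F Fr Fp Fγ : ℝ → ℝ → ℝ → ℝ → ℝ → ℝ) : Prop where
  lipschitz : ∃ L : ℝ, 0 ≤ L ∧ ∀ t x x' r r' p p' γ γ',
    |F t x r p γ - F t x' r' p' γ'| ≤ L * (|x - x'| + |r - r'| + |p - p'| + |γ - γ'|)
  bound_at_zero : ∃ C : ℝ, ∀ t x, |F t x 0 0 0| ≤ C
  differentiable : ∀ t x r p γ, DifferentiableAt ℝ
    (fun q : ℝ × ℝ × ℝ => F t x q.1 q.2.1 q.2.2) (r, p, γ)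
  deriv_eq : ∀ t x r p γ (dq : ℝ × ℝ × ℝ),
    fderiv ℝ (fun q : ℝ × ℝ × ℝ => F t x q.1 q.2.1 q.2.2) (r, p, γ) dq
      = Fr t x r p γ * dq.1 + Fp t x r p γ * dq.2.1 + Fγ t x r p γ * dq.2.2
  nonneg : ∀ t x r p γ, 0 ≤ Fγ t x r p γ
  dominated : ∀ t x r p γ, Fγ t x r p γ ≤ σ t x ^ 2
  lower_bound : ∃ K : ℝ, 0 ≤ K ∧ ∀ t x r p γ (w : ℝ),
    Fp t x r p γ * w + Fγ t x r p γ * w ^ 2 ≥ -K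

/-! ### Gaussian moments and integration by parts -/

instance gauss1_prob (h : ℝ) : IsProbabilityMeasure (gauss1 h) := by
  unfold gauss1; infer_instance

lemma gauss1_integrable_pow (h : ℝ) (k : ℕ) : Integrable (fun w : ℝ => w ^ k) (gauss1 h) := by
  have := (memLp_id_gaussianReal (μ := 0) (v := h.toNNReal) (k : NNReal)).integrable_norm_pow'
  refine (integrable_norm_iff (by fun_prop)).1 ?_
  simpa [gauss1] using this

lemma gauss1_integrable {h C : ℝ} {f : ℝ → ℝ} (hf : Continuous f)
    (hb : ∀ w, |f w| ≤ C * (1 + w ^ 2) ^ 2) : Integrable f (gauss1 h) := by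
  have h1 : Integrable (fun w : ℝ => C * (1 + w ^ 2) ^ 2) (gauss1 h) := by
    have := (((integrable_const (1 : ℝ)).add ((gauss1_integrable_pow h 2).const_mul 2)).add
      (gauss1_integrable_pow h 4)).const_mul C
    refine this.congr (ae_of_all _ fun w => ?_)
    simp only [Pi.add_apply]; ring
  exact h1.mono' hf.aestronglyMeasurable (ae_of_all _ fun w => by simpa using hb w)

/-- Gaussian integration by parts: `E[W f(W)] = h E[f'(W)]`. -/
lemma gauss1_ibp {h : ℝ} (hh : 0 < h) {f f' : ℝ → ℝ} (hd : ∀ w, HasDerivAt f (f' w) w)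
    (hf : Integrable f (gauss1 h)) (hf' : Integrable f' (gauss1 h))
    (hwf : Integrable (fun w => w * f w) (gauss1 h)) :
    ∫ w, w * f w ∂gauss1 h = h * ∫ w, f' w ∂gauss1 h := by
  have hv : h.toNNReal ≠ 0 := by simpa using hh
  set p := gaussianPDFReal 0 h.toNNReal with hp
  have key : ∀ u : ℝ → ℝ, Integrable u (gauss1 h) → Integrable (fun w => u w * p w) := by
    intro u hu
    rw [gauss1, gaussianReal_of_var_ne_zero _ hv,
      integrable_withDensity_iff (measurable_gaussianPDF _ _)
        (ae_of_all _ fun _ => gaussianPDF_lt_top)] at hu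
    simpa [toReal_gaussianPDF] using hu
  have hpd : ∀ w, HasDerivAt p (-(w / h) * p w) w := by
    intro w
    have h1 : HasDerivAt (fun w : ℝ => -w ^ 2 / (2 * h)) (-(w / h)) w := by
      refine ((hasDerivAt_pow 2 w).neg.div_const (2 * h)).congr_deriv ?_
      push_cast; field_simp
    have hpe : p = fun w => (√(2 * π * h))⁻¹ * rexp (-w ^ 2 / (2 * h)) := by
      ext w; simp [hp, gaussianPDFReal_def, Real.coe_toNNReal _ hh.le]
    rw [hpe]
    exact ((h1.exp).const_mul (√(2 * π * h))⁻¹).congr_deriv (by ring)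
  have e := integral_mul_deriv_eq_deriv_mul_of_integrable (u := f) (v := p) (u' := f')
    (v' := fun w => -(w / h) * p w) (fun w _ => hd w) (fun w _ => hpd w)
    (by
      refine ((key _ hwf).const_mul (-h⁻¹)).congr (ae_of_all _ fun w => ?_)
      simp only [Pi.mul_apply]; ring)
    (key _ hf') (key _ hf)
  unfold gauss1
  rw [integral_gaussianReal_eq_integral_smul hv, integral_gaussianReal_eq_integral_smul hv]
  have e1 : ∫ w, f w * (-(w / h) * p w) = -h⁻¹ * ∫ w, p w • (w * f w) := by
    rw [← integral_const_mul]; congr 1; ext w; simp only [smul_eq_mul]; ring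
  have e2 : ∫ w, f' w * p w = ∫ w, p w • f' w := by
    congr 1; ext w; simp only [smul_eq_mul]; ring
  rw [e1, e2] at e
  have : h * (h⁻¹ * ∫ w, p w • (w * f w)) = h * ∫ w, p w • f' w := by
    congr 1; linarith
  rwa [mul_inv_cancel_left₀ hh.ne'] at this

lemma gauss1_moment_succ {h : ℝ} (hh : 0 < h) (k : ℕ) :
    ∫ w, w ^ (k + 2) ∂gauss1 h = h * ((k + 1) * ∫ w, w ^ k ∂gauss1 h) := by
  have e := gauss1_ibp hh (f := fun w => w ^ (k + 1)) (f' := fun w => ((k + 1 : ℕ) : ℝ) * w ^ k)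
    (fun w => by simpa using hasDerivAt_pow (k + 1) w) (gauss1_integrable_pow h _)
    ((gauss1_integrable_pow h k).const_mul _)
    ((gauss1_integrable_pow h (k + 2)).congr (ae_of_all _ fun w => by simp only; ring))
  rw [integral_const_mul] at e
  push_cast at e
  rw [← e]; congr 1; ext w; ring

lemma gauss1_integral_quartic {h : ℝ} (hh : 0 < h) (a₀ a₁ a₂ a₃ a₄ : ℝ) :
    ∫ w, (a₀ + a₁ * w ^ 1 + a₂ * w ^ 2 + a₃ * w ^ 3 + a₄ * w ^ 4) ∂gauss1 h
      = a₀ + a₂ * h + 3 * a₄ * h ^ 2 := by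
  have m0 : ∫ w : ℝ, w ^ 0 ∂gauss1 h = 1 := by simp
  have m1 : ∫ w : ℝ, w ^ 1 ∂gauss1 h = 0 := by simp [gauss1]
  have m2 := gauss1_moment_succ hh 0
  have m3 := gauss1_moment_succ hh 1
  have m4 := gauss1_moment_succ hh 2
  have i := fun (a : ℝ) (k : ℕ) => (gauss1_integrable_pow h k).const_mul a
  have i0 : Integrable (fun _ : ℝ => a₀) (gauss1 h) := integrable_const _
  have i1 : Integrable (fun w : ℝ => a₀ + a₁ * w ^ 1) (gauss1 h) := i0.add (i a₁ 1)
  have i2 : Integrable (fun w : ℝ => a₀ + a₁ * w ^ 1 + a₂ * w ^ 2) (gauss1 h) := i1.add (i a₂ 2)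
  have i3 : Integrable (fun w : ℝ => a₀ + a₁ * w ^ 1 + a₂ * w ^ 2 + a₃ * w ^ 3) (gauss1 h) :=
    i2.add (i a₃ 3)
  rw [integral_add i3 (i a₄ 4), integral_add i2 (i a₃ 3), integral_add i1 (i a₂ 2),
    integral_add i0 (i a₁ 1)]
  simp only [integral_const_mul]
  norm_num only [m0, m1] at m2 m3 m4
  rw [m4, m3, m2, m1]
  simp; ring

/-! ### Weighted expectations and their derivative in the parameters -/

/-- The weight `k₀ + k₁ w/s + k₂ (w² - h)/s²` multiplying `ψ(m + s w)`. -/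
def wt (k₀ k₁ k₂ h s w : ℝ) : ℝ := k₀ + k₁ * s⁻¹ * w + k₂ * s⁻¹ ^ 2 * (w ^ 2 - h)

/-- The kernel that multiplies `ψ'(m + s w)` after `E[ψ(m + s W) wt]` is differentiated in the
direction `(dm, ds)` of the parameters `(m, s)` and integrated by parts. -/
def kern (k₀ k₁ k₂ h dm ds s w : ℝ) : ℝ :=
  (dm + ds * w) * wt k₀ k₁ k₂ h s w - (k₁ * ds * h * s⁻¹ + 2 * k₂ * ds * h * s⁻¹ ^ 2 * w)

/-- Growth bounds are all written against `1 + w²`, so that products are integrable by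
`gauss1_integrable`. -/
lemma quad_bound {a b c A B C : ℝ} (ha : |a| ≤ A) (hb : |b| ≤ B) (hc : |c| ≤ C) (w : ℝ) :
    |a + b * w + c * w ^ 2| ≤ (A + B + C) * (1 + w ^ 2) := by
  have hw : |w| ≤ 1 + w ^ 2 := by
    rw [abs_le]
    constructor <;> nlinarith [sq_nonneg (w + 1), sq_nonneg (w - 1), sq_nonneg w]
  have h1 := abs_add_three a (b * w) (c * w ^ 2)
  rw [abs_mul, abs_mul, abs_of_nonneg (sq_nonneg w)] at h1
  have h2 : |b| * |w| ≤ B * (1 + w ^ 2) := mul_le_mul hb hw (abs_nonneg _) ((abs_nonneg _).trans hb)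
  have h3 : |c| * w ^ 2 ≤ C * (1 + w ^ 2) :=
    mul_le_mul hc (by linarith) (sq_nonneg _) ((abs_nonneg _).trans hc)
  have h4 : A ≤ A * (1 + w ^ 2) := by nlinarith [(abs_nonneg _).trans ha, sq_nonneg w]
  linarith

lemma lip_growth {ψ : ℝ → ℝ} {L : ℝ} (hL0 : 0 ≤ L) (hL : ∀ y y', |ψ y - ψ y'| ≤ L * |y - y'|)
    {m s M S : ℝ} (hm : |m| ≤ M) (hs : |s| ≤ S) (w : ℝ) :
    |ψ (m + s * w)| ≤ (|ψ 0| + L * (M + S)) * (1 + w ^ 2) := by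
  have h1 := hL (m + s * w) 0
  have h2 := quad_bound hm hs (by simp : |(0 : ℝ)| ≤ 0) w
  have h3 : |ψ (m + s * w)| ≤ |ψ (m + s * w) - ψ 0| + |ψ 0| := by
    simpa using abs_add_le (ψ (m + s * w) - ψ 0) (ψ 0)
  simp only [zero_mul, add_zero, sub_zero] at h1 h2
  have h4 := mul_le_mul_of_nonneg_left h2 hL0
  nlinarith [abs_nonneg (ψ 0), sq_nonneg w, mul_nonneg (abs_nonneg (ψ 0)) (sq_nonneg w)]

lemma mul_bound {a b A B w : ℝ} (ha : |a| ≤ A * (1 + w ^ 2)) (hb : |b| ≤ B * (1 + w ^ 2)) :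
    |a * b| ≤ A * B * (1 + w ^ 2) ^ 2 := by
  rw [abs_mul]
  calc |a| * |b| ≤ (A * (1 + w ^ 2)) * (B * (1 + w ^ 2)) :=
        mul_le_mul ha hb (abs_nonneg _) ((abs_nonneg _).trans ha)
    _ = _ := by ring

lemma const_bound {a A : ℝ} (ha : |a| ≤ A) (w : ℝ) : |a| ≤ A * (1 + w ^ 2) := by
  nlinarith [(abs_nonneg _).trans ha, sq_nonneg w]

lemma wt_bound {k₀ k₁ k₂ h s U : ℝ} (hU : |s⁻¹| ≤ U) (w : ℝ) :
    |wt k₀ k₁ k₂ h s w|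
      ≤ ((|k₀| + |k₂| * U ^ 2 * |h|) + |k₁| * U + |k₂| * U ^ 2) * (1 + w ^ 2) := by
  have h2 : |k₂ * s⁻¹ ^ 2| ≤ |k₂| * U ^ 2 := by
    rw [abs_mul, abs_pow]; gcongr
  have h0 : |k₀ - k₂ * s⁻¹ ^ 2 * h| ≤ |k₀| + |k₂| * U ^ 2 * |h| := by
    refine (abs_sub _ _).trans ?_
    rw [abs_mul _ h]; gcongr
  have h1 : |k₁ * s⁻¹| ≤ |k₁| * U := by rw [abs_mul]; gcongr
  have := quad_bound h0 h1 h2 w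
  convert this using 2
  unfold wt; ring

lemma wt_continuous (k₀ k₁ k₂ h s : ℝ) : Continuous (wt k₀ k₁ k₂ h s) := by
  unfold wt; fun_prop

lemma integrable_lip_mul_wt {ψ : ℝ → ℝ} {L : ℝ} (hL0 : 0 ≤ L) (hc : Continuous ψ)
    (hL : ∀ y y', |ψ y - ψ y'| ≤ L * |y - y'|) (m s k₀ k₁ k₂ h a b : ℝ) :
    Integrable (fun w => ψ (m + s * w) * wt k₀ k₁ k₂ a b w) (gauss1 h) :=
  gauss1_integrable (by have := wt_continuous k₀ k₁ k₂ a b; fun_prop)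
    fun w => mul_bound (lip_growth hL0 hL le_rfl le_rfl w) (wt_bound le_rfl w)

/-- Any quadratic in `w` is a weight. -/
lemma wt_one (k₀ k₁ k₂ h w : ℝ) : wt k₀ k₁ k₂ h 1 w = k₀ + k₁ * w + k₂ * (w ^ 2 - h) := by
  simp [wt]

section C1
variable {ψ ψ' : ℝ → ℝ} {L h : ℝ}

lemma integrable_deriv_mul_wt (hc : Continuous ψ') (hb : ∀ y, |ψ' y| ≤ L)
    (m s k₀ k₁ k₂ h a b : ℝ) :
    Integrable (fun w => ψ' (m + s * w) * wt k₀ k₁ k₂ a b w) (gauss1 h) :=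
  gauss1_integrable (by have := wt_continuous k₀ k₁ k₂ a b; fun_prop)
    fun w => mul_bound (const_bound (hb _) w) (wt_bound le_rfl w)

lemma ibp_one (hh : 0 < h) (hd : ∀ y, HasDerivAt ψ (ψ' y) y) (hc' : Continuous ψ')
    (hb : ∀ y, |ψ' y| ≤ L) (hL : ∀ y y', |ψ y - ψ y'| ≤ L * |y - y'|) (m s : ℝ) :
    ∫ w, w * ψ (m + s * w) ∂gauss1 h = h * s * ∫ w, ψ' (m + s * w) ∂gauss1 h := by
  have hL0 : 0 ≤ L := (abs_nonneg _).trans (hb 0)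
  have hc : Continuous ψ := continuous_iff_continuousAt.2 fun y => (hd y).continuousAt
  have h1 := fun k₀ k₁ k₂ => integrable_lip_mul_wt hL0 hc hL m s k₀ k₁ k₂ h h 1
  have h2 := fun k₀ k₁ k₂ => integrable_deriv_mul_wt (h := h) hc' hb m s k₀ k₁ k₂ h 1
  simp only [wt_one] at h1 h2
  have := gauss1_ibp hh (f := fun w => ψ (m + s * w)) (f' := fun w => s * ψ' (m + s * w))
    (fun w => by
      have e : HasDerivAt (fun w => m + s * w) s w := by
        simpa using ((hasDerivAt_id w).const_mul s).const_add m
      simpa [mul_comm, Function.comp_def] using (hd (m + s * w)).comp w e)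
    (by simpa using h1 1 0 0) (by simpa [mul_comm] using h2 s 0 0)
    (by simpa [mul_comm] using h1 0 1 0)
  rw [this, integral_const_mul, mul_assoc]

lemma ibp_two (hh : 0 < h) (hd : ∀ y, HasDerivAt ψ (ψ' y) y) (hc' : Continuous ψ')
    (hb : ∀ y, |ψ' y| ≤ L) (hL : ∀ y y', |ψ y - ψ y'| ≤ L * |y - y'|) (m s : ℝ) :
    ∫ w, (w ^ 2 - h) * ψ (m + s * w) ∂gauss1 h
      = h * s * ∫ w, w * ψ' (m + s * w) ∂gauss1 h := by
  have hL0 : 0 ≤ L := (abs_nonneg _).trans (hb 0)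
  have hc : Continuous ψ := continuous_iff_continuousAt.2 fun y => (hd y).continuousAt
  have h1 := fun k₀ k₁ k₂ => integrable_lip_mul_wt hL0 hc hL m s k₀ k₁ k₂ h h 1
  have h2 := fun k₀ k₁ k₂ => integrable_deriv_mul_wt (h := h) hc' hb m s k₀ k₁ k₂ h 1
  simp only [wt_one] at h1 h2
  have i1 : Integrable (fun w => ψ (m + s * w)) (gauss1 h) := by simpa using h1 1 0 0
  have i2 : Integrable (fun w => w * ψ' (m + s * w)) (gauss1 h) := by
    simpa [mul_comm] using h2 0 1 0
  have i3 : Integrable (fun w => w * (w * ψ (m + s * w))) (gauss1 h) :=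
    (h1 h 0 1).congr (ae_of_all _ fun w => by simp only; ring)
  have := gauss1_ibp hh (f := fun w => w * ψ (m + s * w))
    (f' := fun w => ψ (m + s * w) + s * (w * ψ' (m + s * w)))
    (fun w => by
      have e : HasDerivAt (fun w => m + s * w) s w := by
        simpa using ((hasDerivAt_id w).const_mul s).const_add m
      have e2 : HasDerivAt (fun w => ψ (m + s * w)) (ψ' (m + s * w) * s) w :=
        (hd (m + s * w)).comp w e
      exact ((hasDerivAt_id' w).mul e2).congr_deriv (by ring))
    (by simpa [mul_comm] using h1 0 1 0) (i1.add (i2.const_mul s)) i3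
  rw [integral_add i1 (i2.const_mul s), integral_const_mul] at this
  have e : ∫ w, (w ^ 2 - h) * ψ (m + s * w) ∂gauss1 h
      = ∫ w, w * (w * ψ (m + s * w)) ∂gauss1 h - h * ∫ w, ψ (m + s * w) ∂gauss1 h := by
    rw [← integral_const_mul, ← integral_sub i3 (i1.const_mul h)]
    congr 1; ext w; ring
  rw [e, this]; ring

/-- Differentiation of `E[ψ(m + sW) wt]` along a segment in `(m, s)`. The derivative of the weight
in `s` multiplies `ψ` rather than `ψ'`; Gaussian integration by parts turns that term into the
subtracted part of `kern`. -/
lemma hasDerivAt_expect (hh : 0 < h) (hd : ∀ y, HasDerivAt ψ (ψ' y) y) (hc' : Continuous ψ')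
    (hb : ∀ y, |ψ' y| ≤ L) (hL : ∀ y y', |ψ y - ψ y'| ≤ L * |y - y'|)
    (k₀ k₁ k₂ m₀ s₀ dm ds θ : ℝ) (hs : 0 < s₀ + θ * ds) :
    HasDerivAt (fun θ => ∫ w, ψ ((m₀ + θ * dm) + (s₀ + θ * ds) * w) *
        wt k₀ k₁ k₂ h (s₀ + θ * ds) w ∂gauss1 h)
      (∫ w, ψ' ((m₀ + θ * dm) + (s₀ + θ * ds) * w) *
        kern k₀ k₁ k₂ h dm ds (s₀ + θ * ds) w ∂gauss1 h) θ := by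
  have hL0 : 0 ≤ L := (abs_nonneg _).trans (hb 0)
  have hc : Continuous ψ := continuous_iff_continuousAt.2 fun y => (hd y).continuousAt
  set c := (s₀ + θ * ds) / 2 with hcdef
  have hcpos : 0 < c := by positivity
  set S : Set ℝ := {τ | c < s₀ + τ * ds} ∩ Metric.ball θ 1 with hS
  have hSn : S ∈ nhds θ := by
    refine Filter.inter_mem ?_ (Metric.ball_mem_nhds _ one_pos)
    exact (isOpen_lt continuous_const (by fun_prop)).mem_nhds (by change c < s₀ + θ * ds; linarith)
  set R := |θ| + 1
  have hR : ∀ τ ∈ S, |τ| ≤ R := fun τ hτ => by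
    have : |τ - θ| < 1 := by simpa [Real.dist_eq] using hτ.2
    have := abs_add_le (τ - θ) θ
    simp only [sub_add_cancel] at this
    linarith
  have hlin : ∀ τ ∈ S, ∀ a b : ℝ, |a + τ * b| ≤ |a| + R * |b| := fun τ hτ a b => by
    refine (abs_add_le _ _).trans ?_
    rw [abs_mul]; have := hR τ hτ; gcongr
  have hU : ∀ τ ∈ S, |(s₀ + τ * ds)⁻¹| ≤ c⁻¹ := fun τ hτ => by
    have : c < s₀ + τ * ds := hτ.1
    rw [abs_of_pos (inv_pos.2 (hcpos.trans this))]
    exact inv_anti₀ hcpos this.le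
  -- the derivative of the weight in the parameter is `s⁻¹` times another weight
  set G' : ℝ → ℝ → ℝ := fun τ w =>
    ψ' ((m₀ + τ * dm) + (s₀ + τ * ds) * w) * (dm + ds * w) * wt k₀ k₁ k₂ h (s₀ + τ * ds) w
    + ψ ((m₀ + τ * dm) + (s₀ + τ * ds) * w) *
      ((s₀ + τ * ds)⁻¹ * wt 0 (-k₁ * ds) (-2 * k₂ * ds) h (s₀ + τ * ds) w) with hG'
  have hwc := wt_continuous
  obtain ⟨B, hB⟩ : ∃ B, ∀ w, ∀ τ ∈ S, ‖G' τ w‖ ≤ B * (1 + w ^ 2) ^ 2 := by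
    refine ⟨L * (|dm| + |ds| + 0) *
        ((|k₀| + |k₂| * c⁻¹ ^ 2 * |h|) + |k₁| * c⁻¹ + |k₂| * c⁻¹ ^ 2) +
      (|ψ 0| + L * ((|m₀| + R * |dm|) + (|s₀| + R * |ds|))) *
        (c⁻¹ * ((|0| + |-2 * k₂ * ds| * c⁻¹ ^ 2 * |h|) + |-k₁ * ds| * c⁻¹ +
          |-2 * k₂ * ds| * c⁻¹ ^ 2)), fun w τ hτ => ?_⟩
    rw [Real.norm_eq_abs]
    refine (abs_add_le _ _).trans ?_
    have e1 : |ψ' ((m₀ + τ * dm) + (s₀ + τ * ds) * w) * (dm + ds * w)|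
        ≤ L * (|dm| + |ds| + 0) * (1 + w ^ 2) := by
      have := quad_bound (le_refl |dm|) (le_refl |ds|) (by simp : |(0 : ℝ)| ≤ 0) w
      simp only [zero_mul, add_zero] at this ⊢
      rw [abs_mul, mul_assoc]
      exact mul_le_mul (hb _) this (abs_nonneg _) hL0
    have e2 := wt_bound (k₀ := k₀) (k₁ := k₁) (k₂ := k₂) (h := h) (hU τ hτ) w
    have e3 := lip_growth hL0 hL (hlin τ hτ m₀ dm) (hlin τ hτ s₀ ds) w
    have e4 : |(s₀ + τ * ds)⁻¹ * wt 0 (-k₁ * ds) (-2 * k₂ * ds) h (s₀ + τ * ds) w| ≤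
        c⁻¹ * ((|0| + |-2 * k₂ * ds| * c⁻¹ ^ 2 * |h|) + |-k₁ * ds| * c⁻¹ +
          |-2 * k₂ * ds| * c⁻¹ ^ 2) * (1 + w ^ 2) := by
      rw [abs_mul, mul_assoc c⁻¹]
      exact mul_le_mul (hU τ hτ) (wt_bound (hU τ hτ) w) (abs_nonneg _) (inv_pos.2 hcpos).le
    have := add_le_add (mul_bound e1 e2) (mul_bound e3 e4)
    rw [← add_mul] at this
    exact this
  have hGc : ∀ τ, Continuous (G' τ) := fun τ => by
    have := hwc k₀ k₁ k₂ h (s₀ + τ * ds)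
    have := hwc 0 (-k₁ * ds) (-2 * k₂ * ds) h (s₀ + τ * ds)
    simp only [hG']; fun_prop
  have key := hasDerivAt_integral_of_dominated_loc_of_deriv_le (μ := gauss1 h) (x₀ := θ)
    (F := fun θ w => ψ ((m₀ + θ * dm) + (s₀ + θ * ds) * w) * wt k₀ k₁ k₂ h (s₀ + θ * ds) w)
    (F' := G') (bound := fun w => B * (1 + w ^ 2) ^ 2) hSn
    (Filter.Eventually.of_forall fun τ =>
      (integrable_lip_mul_wt hL0 hc hL _ _ _ _ _ _ _ _).aestronglyMeasurable)
    (integrable_lip_mul_wt hL0 hc hL _ _ _ _ _ _ _ _)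
    (hGc θ).aestronglyMeasurable
    (ae_of_all _ fun w τ hτ => hB w τ hτ)
    (gauss1_integrable (C := |B|) (by fun_prop) fun w => by
      rw [abs_mul, abs_of_nonneg (a := (1 + w ^ 2) ^ 2) (sq_nonneg _)])
    (ae_of_all _ fun w τ hτ => by
      have hpos : s₀ + τ * ds ≠ 0 := (hcpos.trans hτ.1).ne'
      have e1 : HasDerivAt (fun τ => m₀ + τ * dm) dm τ := by
        simpa using ((hasDerivAt_id τ).mul_const dm).const_add m₀
      have e2 : HasDerivAt (fun τ => s₀ + τ * ds) ds τ := by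
        simpa using ((hasDerivAt_id τ).mul_const ds).const_add s₀
      have e3 := (hd ((m₀ + τ * dm) + (s₀ + τ * ds) * w)).comp τ (e1.add (e2.mul_const w))
      have e4 := e2.inv hpos
      have e5 : HasDerivAt (fun τ => wt k₀ k₁ k₂ h (s₀ + τ * ds) w)
          ((s₀ + τ * ds)⁻¹ * wt 0 (-k₁ * ds) (-2 * k₂ * ds) h (s₀ + τ * ds) w) τ := by
        unfold wt
        refine ((((e4.const_mul k₁).mul_const w).const_add k₀).add
          (((e4.pow 2).const_mul k₂).mul_const (w ^ 2 - h))).congr_deriv ?_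
        simp only [Pi.inv_apply, div_eq_mul_inv, ← inv_pow]
        push_cast
        ring
      refine (e3.mul e5).congr_deriv ?_
      simp [hG'])
  refine key.2.congr_deriv ?_
  set m := m₀ + θ * dm
  set s := s₀ + θ * ds
  have I1 : Integrable (fun w => ψ' (m + s * w) * ((dm + ds * w) * wt k₀ k₁ k₂ h s w))
      (gauss1 h) := by
    refine gauss1_integrable (C := L * (|dm| + |ds| + 0) *
        ((|k₀| + |k₂| * |s⁻¹| ^ 2 * |h|) + |k₁| * |s⁻¹| + |k₂| * |s⁻¹| ^ 2))
      (by have := hwc k₀ k₁ k₂ h s; fun_prop) fun w => ?_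
    rw [← mul_assoc]
    refine mul_bound ?_ (wt_bound le_rfl w)
    have := quad_bound (le_refl |dm|) (le_refl |ds|) (by simp : |(0 : ℝ)| ≤ 0) w
    simp only [zero_mul, add_zero] at this ⊢
    rw [abs_mul, mul_assoc]
    exact mul_le_mul (hb _) this (abs_nonneg _) hL0
  have h1 := fun k₀ k₁ k₂ => integrable_lip_mul_wt hL0 hc hL m s k₀ k₁ k₂ h h 1
  have h2 := fun k₀ k₁ k₂ => integrable_deriv_mul_wt (h := h) hc' hb m s k₀ k₁ k₂ h 1
  simp only [wt_one] at h1 h2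
  have j1 : Integrable (fun w => w * ψ (m + s * w)) (gauss1 h) := by
    simpa [mul_comm] using h1 0 1 0
  have j2 : Integrable (fun w => (w ^ 2 - h) * ψ (m + s * w)) (gauss1 h) := by
    simpa [mul_comm] using h1 0 0 1
  have j3 : Integrable (fun w => ψ' (m + s * w)) (gauss1 h) := by
    simpa [mul_comm] using h2 1 0 0
  have j4 : Integrable (fun w => w * ψ' (m + s * w)) (gauss1 h) := by
    simpa [mul_comm] using h2 0 1 0
  have E1 : ∫ w, G' θ w ∂gauss1 h
      = ∫ w, ψ' (m + s * w) * ((dm + ds * w) * wt k₀ k₁ k₂ h s w) ∂gauss1 h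
        + (-(k₁ * ds * s⁻¹ ^ 2) * ∫ w, w * ψ (m + s * w) ∂gauss1 h
        + -(2 * k₂ * ds * s⁻¹ ^ 3) * ∫ w, (w ^ 2 - h) * ψ (m + s * w) ∂gauss1 h) := by
    rw [← integral_const_mul, ← integral_const_mul,
      ← integral_add (j1.const_mul _) (j2.const_mul _)]
    refine Eq.trans ?_ (integral_add I1 ((j1.const_mul _).add (j2.const_mul _)))
    congr 1; ext w; simp only [hG', wt]; ring
  have E2 : ∫ w, ψ' (m + s * w) * kern k₀ k₁ k₂ h dm ds s w ∂gauss1 h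
      = ∫ w, ψ' (m + s * w) * ((dm + ds * w) * wt k₀ k₁ k₂ h s w) ∂gauss1 h
        + (-(k₁ * ds * h * s⁻¹) * ∫ w, ψ' (m + s * w) ∂gauss1 h
        + -(2 * k₂ * ds * h * s⁻¹ ^ 2) * ∫ w, w * ψ' (m + s * w) ∂gauss1 h) := by
    rw [← integral_const_mul, ← integral_const_mul,
      ← integral_add (j3.const_mul _) (j4.const_mul _)]
    refine Eq.trans ?_ (integral_add I1 ((j3.const_mul _).add (j4.const_mul _)))
    congr 1; ext w; simp only [kern]; ring
  rw [E1, E2, ibp_one hh hd hc' hb hL, ibp_two hh hd hc' hb hL]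
  have hs0 : s ≠ 0 := hs.ne'
  congr 1
  field_simp

end C1

/-! ### Duality for Lipschitz functions -/

lemma lip_continuous {ψ : ℝ → ℝ} {L : ℝ} (hL0 : 0 ≤ L)
    (hL : ∀ y y', |ψ y - ψ y'| ≤ L * |y - y'|) : Continuous ψ :=
  (LipschitzWith.of_dist_le_mul (K := L.toNNReal) fun y y' => by
    simpa [Real.dist_eq, hL0] using hL y y').continuous

lemma kern_integrable (k₀ k₁ k₂ a dm ds s h : ℝ) :
    Integrable (kern k₀ k₁ k₂ a dm ds s) (gauss1 h) := by
  have i := fun (c : ℝ) (k : ℕ) => (gauss1_integrable_pow h k).const_mul c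
  refine ((((i (dm * k₀ - dm * k₂ * s⁻¹ ^ 2 * a - k₁ * ds * a * s⁻¹) 0).add
    (i (dm * k₁ * s⁻¹ + ds * k₀ - ds * k₂ * s⁻¹ ^ 2 * a - 2 * k₂ * ds * a * s⁻¹ ^ 2) 1)).add
    (i (dm * k₂ * s⁻¹ ^ 2 + ds * k₁ * s⁻¹) 2)).add (i (ds * k₂ * s⁻¹ ^ 2) 3)).congr
    (ae_of_all _ fun w => ?_)
  simp only [kern, wt, Pi.add_apply]; ring

lemma c1_duality {ψ ψ' : ℝ → ℝ} {L h : ℝ} (hh : 0 < h) (hd : ∀ y, HasDerivAt ψ (ψ' y) y)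
    (hc' : Continuous ψ') (hb : ∀ y, |ψ' y| ≤ L) (hL : ∀ y y', |ψ y - ψ y'| ≤ L * |y - y'|)
    {k₀ k₁ k₂ m₀ s₀ dm ds B : ℝ} (hs : ∀ θ ∈ Icc (0 : ℝ) 1, 0 < s₀ + θ * ds)
    (hB : ∀ θ ∈ Icc (0 : ℝ) 1, ∫ w, |kern k₀ k₁ k₂ h dm ds (s₀ + θ * ds) w| ∂gauss1 h ≤ B) :
    |∫ w, ψ ((m₀ + dm) + (s₀ + ds) * w) * wt k₀ k₁ k₂ h (s₀ + ds) w ∂gauss1 h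
      - ∫ w, ψ (m₀ + s₀ * w) * wt k₀ k₁ k₂ h s₀ w ∂gauss1 h| ≤ L * B := by
  have hL0 : 0 ≤ L := (abs_nonneg _).trans (hb 0)
  have := norm_image_sub_le_of_norm_deriv_le_segment_01' (C := L * B)
    (fun θ hθ => (hasDerivAt_expect hh hd hc' hb hL k₀ k₁ k₂ m₀ s₀ dm ds θ
      (hs θ hθ)).hasDerivWithinAt)
    (fun θ hθ => by
      have hθ' := Ico_subset_Icc_self hθ
      refine (norm_integral_le_of_norm_le
        (g := fun w => L * |kern k₀ k₁ k₂ h dm ds (s₀ + θ * ds) w|)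
        ((kern_integrable _ _ _ _ _ _ _ _).abs.const_mul L) (ae_of_all _ fun w => ?_)).trans ?_
      · rw [norm_mul]
        exact mul_le_mul_of_nonneg_right (hb _) (abs_nonneg _)
      · rw [integral_const_mul]
        exact mul_le_mul_of_nonneg_left (hB θ hθ') hL0)
  simpa using this

/-- A Lipschitz function is a uniform limit of `C¹` functions with the same Lipschitz constant:
take the averages over `[y, y + ε]`. -/
lemma exists_c1_approx {ψ : ℝ → ℝ} {L : ℝ} (hL : ∀ y y', |ψ y - ψ y'| ≤ L * |y - y'|)
    {ε : ℝ} (hε : 0 < ε) :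
    ∃ φ φ' : ℝ → ℝ, (∀ y, HasDerivAt φ (φ' y) y) ∧ Continuous φ' ∧ (∀ y, |φ' y| ≤ L) ∧
      (∀ y y', |φ y - φ y'| ≤ L * |y - y'|) ∧ ∀ y, |φ y - ψ y| ≤ L * ε := by
  have hL0 : 0 ≤ L := by simpa using (abs_nonneg _).trans (hL 1 0)
  have hc : Continuous ψ := lip_continuous hL0 hL
  set Ψ : ℝ → ℝ := fun y => ∫ t in (0 : ℝ)..y, ψ t
  have hΨ : ∀ y, HasDerivAt Ψ (ψ y) y := fun y => hc.deriv_integral ψ 0 y ▸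
    (intervalIntegral.integral_hasDerivAt_right (hc.intervalIntegrable _ _)
      hc.aestronglyMeasurable.stronglyMeasurableAtFilter hc.continuousAt).differentiableAt.hasDerivAt
  have hd : ∀ y, HasDerivAt (fun y => ε⁻¹ * (Ψ (y + ε) - Ψ y)) (ε⁻¹ * (ψ (y + ε) - ψ y)) y :=
    fun y => (((hΨ (y + ε)).comp_add_const y ε).sub (hΨ y)).const_mul _
  have hb : ∀ y, |ε⁻¹ * (ψ (y + ε) - ψ y)| ≤ L := fun y => by
    have := hL (y + ε) y
    rw [add_sub_cancel_left, abs_of_pos hε] at this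
    rw [abs_mul, abs_of_pos (inv_pos.2 hε), inv_mul_le_iff₀ hε]
    linarith
  refine ⟨_, _, hd, by fun_prop, hb, fun y y' => ?_, fun y => ?_⟩
  · exact convex_univ.norm_image_sub_le_of_norm_hasDerivWithin_le
      (fun z _ => (hd z).hasDerivWithinAt) (fun z _ => hb z) (mem_univ _) (mem_univ _)
  · obtain ⟨ξ, hξ, e⟩ := exists_hasDerivAt_eq_slope Ψ ψ (by linarith : y < y + ε)
      (continuousOn_of_forall_continuousAt fun z _ => (hΨ z).continuousAt) (fun z _ => hΨ z)
    have e' : ε⁻¹ * (Ψ (y + ε) - Ψ y) = ψ ξ := by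
      rw [e, add_sub_cancel_left]; ring
    simp only [e']
    refine (hL _ _).trans (mul_le_mul_of_nonneg_left ?_ hL0)
    rw [abs_le]; constructor <;> linarith [hξ.1, hξ.2]

/-- Kantorovich-type estimate: for `L`-Lipschitz `ψ`, the expectations `E[ψ(m + sW) wt]` at two
parameters differ by at most `L` times the largest `L¹` norm of the kernel along the segment. -/
lemma lip_duality {ψ : ℝ → ℝ} {L h : ℝ} (hh : 0 < h)
    (hL : ∀ y y', |ψ y - ψ y'| ≤ L * |y - y'|)
    {k₀ k₁ k₂ m₀ s₀ dm ds B : ℝ} (hs : ∀ θ ∈ Icc (0 : ℝ) 1, 0 < s₀ + θ * ds)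
    (hB : ∀ θ ∈ Icc (0 : ℝ) 1, ∫ w, |kern k₀ k₁ k₂ h dm ds (s₀ + θ * ds) w| ∂gauss1 h ≤ B) :
    |∫ w, ψ ((m₀ + dm) + (s₀ + ds) * w) * wt k₀ k₁ k₂ h (s₀ + ds) w ∂gauss1 h
      - ∫ w, ψ (m₀ + s₀ * w) * wt k₀ k₁ k₂ h s₀ w ∂gauss1 h| ≤ L * B := by
  have hL0 : 0 ≤ L := by simpa using (abs_nonneg _).trans (hL 1 0)
  have hc : Continuous ψ := lip_continuous hL0 hL
  have iw : ∀ s, Integrable (wt k₀ k₁ k₂ h s) (gauss1 h) := fun s => by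
    simpa using integrable_deriv_mul_wt (ψ' := fun _ => (1 : ℝ)) (L := 1) continuous_const (by simp)
      0 0 k₀ k₁ k₂ h h s
  have close : ∀ ε > 0, ∀ φ : ℝ → ℝ, Continuous φ → (∀ y y', |φ y - φ y'| ≤ L * |y - y'|) →
      (∀ y, |φ y - ψ y| ≤ L * ε) → ∀ m s : ℝ,
      |∫ w, φ (m + s * w) * wt k₀ k₁ k₂ h s w ∂gauss1 h
        - ∫ w, ψ (m + s * w) * wt k₀ k₁ k₂ h s w ∂gauss1 h|
        ≤ ε * (L * ∫ w, |wt k₀ k₁ k₂ h s w| ∂gauss1 h) := by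
    intro ε hε φ hφc hφL hφ m s
    rw [← integral_sub (integrable_lip_mul_wt hL0 hφc hφL _ _ _ _ _ _ _ _)
      (integrable_lip_mul_wt hL0 hc hL _ _ _ _ _ _ _ _), ← integral_const_mul,
      ← integral_const_mul, ← Real.norm_eq_abs]
    refine norm_integral_le_of_norm_le (((iw s).abs.const_mul L).const_mul ε)
      (ae_of_all _ fun w => ?_)
    rw [← sub_mul, norm_mul, ← mul_assoc, mul_comm ε L]
    exact mul_le_mul_of_nonneg_right (hφ _) (abs_nonneg _)
  set N₁ := L * ∫ w, |wt k₀ k₁ k₂ h (s₀ + ds) w| ∂gauss1 h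
  set N₀ := L * ∫ w, |wt k₀ k₁ k₂ h s₀ w| ∂gauss1 h
  have hN₁ : 0 ≤ N₁ := mul_nonneg hL0 (integral_nonneg fun _ => abs_nonneg _)
  have hN₀ : 0 ≤ N₀ := mul_nonneg hL0 (integral_nonneg fun _ => abs_nonneg _)
  refine le_of_forall_pos_le_add fun δ hδ => ?_
  set ε := δ / (N₁ + N₀ + 1)
  have hε : 0 < ε := by positivity
  have hεδ : ε * (N₁ + N₀) ≤ δ := by
    have : ε * (N₁ + N₀ + 1) = δ := div_mul_cancel₀ _ (by positivity)
    linarith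
  obtain ⟨φ, φ', hd, hc', hb, hφL, hφ⟩ := exists_c1_approx hL hε
  have hφc : Continuous φ := continuous_iff_continuousAt.2 fun y => (hd y).continuousAt
  have a1 := abs_le.1 (close ε hε φ hφc hφL hφ (m₀ + dm) (s₀ + ds))
  have a2 := abs_le.1 (close ε hε φ hφc hφL hφ m₀ s₀)
  have a3 := abs_le.1 (c1_duality hh hd hc' hb hφL (m₀ := m₀) hs hB)
  rw [abs_le]
  constructor <;> linarith [a1.1, a1.2, a2.1, a2.2, a3.1, a3.2]

/-! ### The L¹ norm of the kernel -/

lemma abs_one_add_add_le (x y : ℝ) : |1 + x + y| ≤ 1 + x + x ^ 2 + y + y ^ 2 := by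
  rw [abs_le]
  constructor <;> linarith [sq_nonneg (x + 1), sq_nonneg (y + 1), sq_nonneg x, sq_nonneg y]

set_option maxHeartbeats 1000000 in
/-- The `L¹` norm of the kernel is `1 + O(h)`, although the individual terms are only `O(√h)`.
The reason is that `wt - 2cαw ≥ -κh`, by completing the square, with `α = q/s²`; so up to `O(h)`
the kernel is a nonnegative density of mass `1 + O(h)` times `1 + bh + cw`. The modulus of the
latter is at most `1 + bh + b²h² + cw + c²w²`, and the terms beyond `1` integrate to `O(h)`. -/
lemma kern_L1_bound {T R K C₁ Lb Lc : ℝ} (hT : 0 < T) (hR : 0 ≤ R) (hK : 0 ≤ K) (hC₁ : 0 ≤ C₁)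
    (hLb : 0 ≤ Lb) (hLc : 0 ≤ Lc) :
    ∃ C, 0 ≤ C ∧ ∀ h r p q s b c : ℝ, 0 < h → h ≤ T → |r| ≤ R → |b| ≤ Lb → |c| ≤ Lc → 0 ≤ q →
      p ^ 2 ≤ 4 * K * q → 0 < s → q ≤ s ^ 2 * (1 + C₁ * h) →
      ∫ w, |kern (1 + h * r) p (q / h) h (1 + b * h) c s w| ∂gauss1 h ≤ 1 + C * h := by
  set A := 1 + C₁ * T with hA
  have hA0 : 0 ≤ A := by positivity
  set κ := C₁ + R + 2 * K + 2 * Lc ^ 2 * A with hκ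
  have hκ0 : 0 ≤ κ := by positivity
  set Bt := 1 + 4 * K * A with hBt
  have hBt0 : 0 ≤ Bt := by positivity
  set e := Lb + Lb ^ 2 * T with he
  have he0 : 0 ≤ e := by positivity
  refine ⟨(R + κ) + e + T * (R + κ) * e + (1 + T * (R + κ)) * Lc ^ 2 + (Bt + 2 * Lc * A) * Lc
    + 3 * A * Lc ^ 2 + 2 * Lc * A * (Lb * (1 + T) / 2 + Lc)
    + κ * (1 + Lb * T + Lc * (1 + T) / 2) + Lc * Bt, by positivity, ?_⟩
  intro h r p q s b c hh hhT hr hb hc hq hp hs hqs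
  set α := q * s⁻¹ ^ 2 with hα
  set β := p * s⁻¹ with hβ
  have hα0 : 0 ≤ α := by positivity
  have hα1 : α ≤ 1 + C₁ * h := by
    have : q * s⁻¹ ^ 2 ≤ s ^ 2 * (1 + C₁ * h) * s⁻¹ ^ 2 := by gcongr
    rwa [mul_right_comm, ← mul_pow, mul_inv_cancel₀ hs.ne', one_pow, one_mul] at this
  have hαA : α ≤ A := hα1.trans (by simp only [hA]; gcongr)
  have hβα : β ^ 2 ≤ 4 * K * α := by
    have : p ^ 2 * s⁻¹ ^ 2 ≤ 4 * K * q * s⁻¹ ^ 2 := by gcongr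
    simp only [hβ, hα]; linarith [mul_pow p s⁻¹ 2]
  have hβB : |β| ≤ Bt := by
    have h1 : β ^ 2 ≤ 4 * K * A := hβα.trans (by gcongr)
    rw [abs_le]; constructor <;> linarith [sq_nonneg (β - 1), sq_nonneg (β + 1), sq_nonneg β]
  have hc2 : c ^ 2 ≤ Lc ^ 2 := sq_le_sq' (abs_le.1 hc).1 (abs_le.1 hc).2
  have hb2 : b ^ 2 ≤ Lb ^ 2 := sq_le_sq' (abs_le.1 hb).1 (abs_le.1 hb).2
  set A₀ := 1 - α + h * r + κ * h with hA₀
  set A₁ := β - 2 * c * α with hA₁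
  set E₀ := 1 + b * h + b ^ 2 * h ^ 2 with hE₀
  -- completing the square
  have hM : ∀ w, 0 ≤ A₀ + A₁ * w + α / h * w ^ 2 := by
    intro w
    have h1 : A₁ ^ 2 ≤ α * (8 * K + 8 * c ^ 2 * α) := by
      simp only [hA₁]; linarith [sq_nonneg (β + 2 * c * α)]
    have h2 : 0 ≤ α / h * w ^ 2 + A₁ * w + h * (2 * K + 2 * c ^ 2 * α) := by
      rcases hα0.eq_or_lt with h0 | h0
      · have : A₁ = 0 := by
          rw [← h0] at h1; simpa using le_antisymm (by simpa using h1) (sq_nonneg A₁)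
        rw [this, ← h0]; simp; positivity
      · have e1 : α / h * w ^ 2 + A₁ * w + h * (2 * K + 2 * c ^ 2 * α)
            = (α / h) * (w + A₁ * h / (2 * α)) ^ 2
              + h / (4 * α) * (α * (8 * K + 8 * c ^ 2 * α) - A₁ ^ 2) := by
          field_simp; ring
        rw [e1]
        have : 0 ≤ α * (8 * K + 8 * c ^ 2 * α) - A₁ ^ 2 := by linarith
        positivity
    have h3 : c ^ 2 * α ≤ Lc ^ 2 * A := by gcongr
    have h4 := (abs_le.1 hr).1
    have h5 : h * (2 * K + 2 * c ^ 2 * α) ≤ h * (2 * K + 2 * Lc ^ 2 * A) :=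
      mul_le_mul_of_nonneg_left (by linarith) hh.le
    have h6 : 0 ≤ h * (r + R) := mul_nonneg hh.le (by linarith)
    simp only [hA₀, hκ]
    linarith
  -- pointwise domination by a quartic polynomial
  set d := 2 * |c| * α * (|b| * h / 2) + κ * h * (1 + |b| * h + |c| / 2) + |c * β| * h with hd
  set d₂ := 2 * |c| * α * (|b| * h / 2 + |c|) + κ * h * (|c| / 2) with hd₂
  have hpt : ∀ w, |kern (1 + h * r) p (q / h) h (1 + b * h) c s w| ≤
      (A₀ * E₀ + d) + (A₀ * c + A₁ * E₀) * w ^ 1 + (A₀ * c ^ 2 + A₁ * c + α / h * E₀ + d₂) * w ^ 2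
        + (A₁ * c ^ 2 + α / h * c) * w ^ 3 + (α / h * c ^ 2) * w ^ 4 := by
    intro w
    set M := A₀ + A₁ * w + α / h * w ^ 2 with hMdef
    set Z := 1 + b * h + c * w with hZ
    have e1 : kern (1 + h * r) p (q / h) h (1 + b * h) c s w
        = Z * M + 2 * c * α * w * (b * h + c * w) - κ * h * Z - c * β * h := by
      have : q / h * s⁻¹ ^ 2 = α / h := by simp only [hα]; ring
      have h2 : 2 * (q / h) * c * h * s⁻¹ ^ 2 * w = 2 * c * α * w := by
        simp only [hα]; field_simp
      have h3 : p * c * h * s⁻¹ = c * β * h := by simp only [hβ]; ring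
      simp only [kern, wt]
      rw [this, h2, h3, ← hβ]
      simp only [hZ, hMdef, hA₀, hA₁]
      field_simp
      ring
    have hw1 : |w| ≤ (1 + w ^ 2) / 2 := by
      rw [abs_le]; constructor <;> linarith [sq_nonneg (w - 1), sq_nonneg (w + 1)]
    have hw2 : |w| * |w| = w ^ 2 := by rw [abs_mul_abs_self, sq]
    have hZ1 : |Z| ≤ E₀ + c * w + c ^ 2 * w ^ 2 := by
      have := abs_one_add_add_le (b * h) (c * w)
      rw [mul_pow, mul_pow] at this
      exact this
    have hZ2 : |Z| ≤ 1 + |b| * h + |c| * ((1 + w ^ 2) / 2) := by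
      refine (abs_add_three _ _ _).trans ?_
      rw [abs_one, abs_mul, abs_mul, abs_of_pos hh]; gcongr
    have t1 : |Z * M| ≤ (E₀ + c * w + c ^ 2 * w ^ 2) * M := by
      rw [abs_mul, abs_of_nonneg (hM w)]
      exact mul_le_mul_of_nonneg_right hZ1 (hM w)
    have t2 : |2 * c * α * w * (b * h + c * w)|
        ≤ 2 * |c| * α * (|b| * h * ((1 + w ^ 2) / 2) + |c| * w ^ 2) := by
      have : |w * (b * h + c * w)| ≤ |b| * h * ((1 + w ^ 2) / 2) + |c| * w ^ 2 := by
        have h1 : w * (b * h + c * w) = b * h * w + c * w ^ 2 := by ring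
        rw [h1]
        refine (abs_add_le _ _).trans ?_
        rw [abs_mul, abs_mul, abs_mul c, abs_of_pos hh, abs_of_nonneg (sq_nonneg w)]
        gcongr
      rw [mul_assoc (2 * c * α), abs_mul, abs_mul, abs_mul, abs_of_nonneg hα0, abs_two]
      gcongr
    have t3 : |κ * h * Z| ≤ κ * h * (1 + |b| * h + |c| * ((1 + w ^ 2) / 2)) := by
      rw [abs_mul, abs_of_nonneg (by positivity : 0 ≤ κ * h)]; gcongr
    have t4 : |c * β * h| = |c * β| * h := by rw [abs_mul, abs_of_pos hh]
    rw [e1]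
    refine (abs_sub _ _).trans ?_
    have t5 := abs_sub (Z * M + 2 * c * α * w * (b * h + c * w)) (κ * h * Z)
    have t6 := abs_add_le (Z * M) (2 * c * α * w * (b * h + c * w))
    rw [t4]
    calc _ ≤ (E₀ + c * w + c ^ 2 * w ^ 2) * M
          + 2 * |c| * α * (|b| * h * ((1 + w ^ 2) / 2) + |c| * w ^ 2)
          + κ * h * (1 + |b| * h + |c| * ((1 + w ^ 2) / 2)) + |c * β| * h := by linarith
      _ = _ := by simp only [hMdef, hd, hd₂]; ring
  have hquart := gauss1_integral_quartic hh (A₀ * E₀ + d) (A₀ * c + A₁ * E₀)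
    (A₀ * c ^ 2 + A₁ * c + α / h * E₀ + d₂) (A₁ * c ^ 2 + α / h * c) (α / h * c ^ 2)
  have i := fun (a : ℝ) (k : ℕ) => (gauss1_integrable_pow h k).const_mul a
  have hle := integral_mono (kern_integrable (1 + h * r) p (q / h) h (1 + b * h) c s h).abs
    (((((integrable_const (A₀ * E₀ + d)).add (i (A₀ * c + A₁ * E₀) 1)).add
      (i (A₀ * c ^ 2 + A₁ * c + α / h * E₀ + d₂) 2)).add (i (A₁ * c ^ 2 + α / h * c) 3)).add
      (i (α / h * c ^ 2) 4)) hpt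
  refine hle.trans ?_
  refine (le_of_eq hquart).trans ?_
  have hv : A₀ * E₀ + d + (A₀ * c ^ 2 + A₁ * c + α / h * E₀ + d₂) * h + 3 * (α / h * c ^ 2) * h ^ 2
      = (1 + h * (r + κ)) * E₀ + h * (A₀ * c ^ 2 + A₁ * c + 3 * (α * c ^ 2)
        + 2 * |c| * α * (|b| * (1 + h) / 2 + |c|) + κ * (1 + |b| * h + |c| * (1 + h) / 2)
        + |c * β|) := by
    simp only [hd, hd₂, hA₀]; field_simp; ring
  rw [hv]
  have b1 : (1 + h * (r + κ)) * E₀ ≤ (1 + h * (R + κ)) * (1 + h * e) := by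
    have hE : E₀ ≤ 1 + h * e := by
      have : b * h ≤ Lb * h := mul_le_mul_of_nonneg_right (abs_le.1 hb).2 hh.le
      have : b ^ 2 * h ^ 2 ≤ Lb ^ 2 * (T * h) := by
        apply mul_le_mul hb2 _ (sq_nonneg _) (sq_nonneg _); rw [sq]; gcongr
      simp only [hE₀, he]; linarith
    have hE0 : 0 ≤ E₀ := by simp only [hE₀]; linarith [sq_nonneg (1 + b * h), sq_nonneg (b * h)]
    have : r ≤ R := (abs_le.1 hr).2
    exact mul_le_mul (by gcongr) hE hE0 (by positivity)
  have b2 : (1 + h * (R + κ)) * (1 + h * e) ≤ 1 + h * ((R + κ) + e + T * (R + κ) * e) := by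
    have : h * (h * ((R + κ) * e)) ≤ h * (T * ((R + κ) * e)) := by gcongr
    linarith
  have b3 : A₀ * c ^ 2 ≤ (1 + T * (R + κ)) * Lc ^ 2 := by
    have h1 : A₀ ≤ 1 + T * (R + κ) := by
      have : h * (r + κ) ≤ h * (R + κ) := by gcongr; exact (abs_le.1 hr).2
      have : h * (R + κ) ≤ T * (R + κ) := by gcongr
      simp only [hA₀]; linarith
    exact mul_le_mul h1 hc2 (sq_nonneg _) (by positivity)
  have b4 : A₁ * c ≤ (Bt + 2 * Lc * A) * Lc := by
    have h1 : |A₁| ≤ Bt + 2 * Lc * A := by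
      refine (abs_sub _ _).trans ?_
      rw [abs_mul (2 * c), abs_mul 2 c, abs_two, abs_of_nonneg hα0]; gcongr
    refine (le_abs_self _).trans ?_
    rw [abs_mul]; gcongr
  have b5 : 3 * (α * c ^ 2) ≤ 3 * A * Lc ^ 2 := by rw [← mul_assoc]; gcongr
  have b6 : 2 * |c| * α * (|b| * (1 + h) / 2 + |c|) ≤ 2 * Lc * A * (Lb * (1 + T) / 2 + Lc) := by
    gcongr
  have b7 : κ * (1 + |b| * h + |c| * (1 + h) / 2) ≤ κ * (1 + Lb * T + Lc * (1 + T) / 2) := by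
    gcongr
  have b8 : |c * β| ≤ Lc * Bt := by rw [abs_mul]; gcongr
  have b9 := mul_le_mul_of_nonneg_left
    (add_le_add (add_le_add (add_le_add (add_le_add (add_le_add b3 b4) b5) b6) b7) b8) hh.le
  linarith

/-! ### One step and iteration -/

/-- The mean value theorem in `(r, p, γ)` linearises `F`; the coefficients inherit the bounds of
the assumption, the lower bound on `F_p w + F_γ w²` becoming a discriminant inequality. -/
lemma AssumptionF1.exists_linear {σ : ℝ → ℝ → ℝ} {F Fr Fp Fγ : ℝ → ℝ → ℝ → ℝ → ℝ → ℝ}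
    (hF : AssumptionF1 σ F Fr Fp Fγ) :
    ∃ R K : ℝ, 0 ≤ R ∧ 0 ≤ K ∧ ∀ t x r r' p p' γ γ', ∃ a b c : ℝ,
      F t x r p γ - F t x r' p' γ' = a * (r - r') + b * (p - p') + c * (γ - γ') ∧
      |a| ≤ R ∧ 0 ≤ c ∧ b ^ 2 ≤ 4 * K * c ∧ c ≤ σ t x ^ 2 := by
  obtain ⟨L, hL0, hL⟩ := hF.lipschitz
  obtain ⟨K, hK0, hK⟩ := hF.lower_bound
  refine ⟨3 * L, K, by positivity, hK0, fun t x r r' p p' γ γ' => ?_⟩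
  set f : ℝ × ℝ × ℝ → ℝ := fun q => F t x q.1 q.2.1 q.2.2 with hf
  obtain ⟨z, -, hz⟩ := domain_mvt (f := f) (f' := fderiv ℝ f) (s := univ) (x := (r', p', γ'))
    (y := (r, p, γ))
    (fun q _ => (hF.differentiable t x q.1 q.2.1 q.2.2).hasFDerivAt.hasFDerivWithinAt)
    convex_univ (mem_univ _) (mem_univ _)
  have hD := hF.deriv_eq t x z.1 z.2.1 z.2.2
  refine ⟨_, _, _, hz.trans (hD _), ?_, hF.nonneg _ _ _ _ _, ?_, hF.dominated _ _ _ _ _⟩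
  · have hlip : LipschitzWith (Real.toNNReal (3 * L)) f := by
      refine LipschitzWith.of_dist_le_mul fun q q' => ?_
      rw [Real.coe_toNNReal _ (by positivity), Real.dist_eq, dist_eq_norm]
      have h1 := hL t x x q.1 q'.1 q.2.1 q'.2.1 q.2.2 q'.2.2
      have n1 : |q.1 - q'.1| ≤ ‖q - q'‖ := norm_fst_le (q - q')
      have n2 : |q.2.1 - q'.2.1| ≤ ‖q - q'‖ :=
        (norm_fst_le (q - q').2).trans (norm_snd_le (q - q'))
      have n3 : |q.2.2 - q'.2.2| ≤ ‖q - q'‖ :=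
        (norm_snd_le (q - q').2).trans (norm_snd_le (q - q'))
      refine h1.trans ?_
      rw [sub_self, abs_zero, mul_comm 3 L, mul_assoc]
      exact mul_le_mul_of_nonneg_left (by linarith) hL0
    have h1 := norm_fderiv_le_of_lipschitz ℝ hlip (x₀ := (z.1, z.2.1, z.2.2))
    rw [Real.coe_toNNReal _ (by positivity)] at h1
    have h2 := (fderiv ℝ f (z.1, z.2.1, z.2.2)).le_opNorm (1, 0, 0)
    rw [hD (1, 0, 0)] at h2
    have h3 : ‖((1, 0, 0) : ℝ × ℝ × ℝ)‖ = 1 := by simp [Prod.norm_def]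
    rw [h3] at h2
    simp only [mul_one, mul_zero, add_zero, Real.norm_eq_abs] at h2
    exact h2.trans h1
  · have := discrim_le_zero (a := Fγ t x z.1 z.2.1 z.2.2) (b := Fp t x z.1 z.2.1 z.2.2) (c := K)
      fun w => by have := hK t x z.1 z.2.1 z.2.2 w; rw [sq] at this; linarith
    unfold discrim at this
    linarith

/-- A linear combination of the three expectations of one step is a single weighted expectation. -/
lemma expect_combine {μ σ : ℝ → ℝ → ℝ} {ψ : ℝ → ℝ} {L h t x : ℝ} (hh : 0 < h) (hσ : 0 < σ t x)
    (hL : ∀ y y', |ψ y - ψ y'| ≤ L * |y - y'|) (a b c : ℝ) :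
    a * (∫ w, ψ (euler1 μ σ h t x w) ∂gauss1 h)
      + h * (b * (∫ w, ψ (euler1 μ σ h t x w) * H1s σ h t x w ∂gauss1 h)
      + c * (∫ w, ψ (euler1 μ σ h t x w) * H2s σ h t x w ∂gauss1 h))
    = ∫ w, ψ ((x + μ t x * h) + σ t x * w) * wt a b (c / h) h (σ t x) w ∂gauss1 h := by
  have hL0 : 0 ≤ L := by
    have := (abs_nonneg _).trans (hL 1 0)
    simpa using this
  have hi := fun k₀ k₁ k₂ => integrable_lip_mul_wt hL0 (lip_continuous hL0 hL) hL (x + μ t x * h)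
    (σ t x) k₀ k₁ k₂ h h 1
  simp only [wt_one] at hi
  have i0 : Integrable (fun w => a * ψ (euler1 μ σ h t x w)) (gauss1 h) :=
    (hi a 0 0).congr (ae_of_all _ fun w => by simp only [euler1]; ring)
  have i1 : Integrable (fun w => h * b * (ψ (euler1 μ σ h t x w) * H1s σ h t x w)) (gauss1 h) :=
    (hi 0 (h * b / (σ t x * h)) 0).congr
      (ae_of_all _ fun w => by simp only [euler1, H1s]; ring)
  have i2 : Integrable (fun w => h * c * (ψ (euler1 μ σ h t x w) * H2s σ h t x w)) (gauss1 h) :=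
    (hi 0 0 (h * c / (σ t x ^ 2 * h ^ 2))).congr
      (ae_of_all _ fun w => by simp only [euler1, H2s]; ring)
  have i01 : Integrable (fun w => a * ψ (euler1 μ σ h t x w)
      + h * b * (ψ (euler1 μ σ h t x w) * H1s σ h t x w)) (gauss1 h) := i0.add i1
  rw [mul_add, ← mul_assoc h b, ← mul_assoc h c, ← integral_const_mul, ← integral_const_mul,
    ← integral_const_mul, ← add_assoc, ← integral_add i0 i1, ← integral_add i01 i2]
  congr 1; ext w
  simp only [euler1, H1s, H2s, wt]
  field_simp

/-- One step of the scheme increases the Lipschitz constant, measured at distances at most `h`,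
by a factor `1 + O(h)` and an additive `O(h)`. -/
lemma step1_lip_local {T : ℝ} (hT : 0 < T) {μ σ : ℝ → ℝ → ℝ}
    (hσbdd : ∃ C : ℝ, ∀ s y, |σ s y| ≤ C)
    (hμreg : ∃ L : ℝ, ∀ s s' y y' : ℝ,
      |μ s y - μ s' y'| ≤ L * (|y - y'| + Real.sqrt |s - s'|))
    (hσreg : ∃ L : ℝ, ∀ s s' y y' : ℝ,
      |σ s y - σ s' y'| ≤ L * (|y - y'| + Real.sqrt |s - s'|))
    {σ₀ : ℝ} (hσ₀ : 0 < σ₀) (hσlb : ∀ s y, σ₀ ≤ σ s y)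
    {F Fr Fp Fγ : ℝ → ℝ → ℝ → ℝ → ℝ → ℝ} (hF : AssumptionF1 σ F Fr Fp Fγ) :
    ∃ C M : ℝ, 0 ≤ C ∧ 0 ≤ M ∧ ∀ (h t L : ℝ) (ψ : ℝ → ℝ), 0 < h → h ≤ T →
      (∀ y y', |ψ y - ψ y'| ≤ L * |y - y'|) → ∀ x x', |x - x'| ≤ h →
      |step1 F μ σ h t ψ x - step1 F μ σ h t ψ x'| ≤ ((1 + C * h) * L + M * h) * |x - x'| := by
  obtain ⟨Cσ, hCσ⟩ := hσbdd
  obtain ⟨Lμ, hLμ⟩ := hμreg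
  obtain ⟨Lσ, hLσ⟩ := hσreg
  obtain ⟨M, hM0, hM⟩ := hF.lipschitz
  obtain ⟨R, K, hR, hK, hlin⟩ := hF.exists_linear
  have hμx : ∀ t x x', |μ t x - μ t x'| ≤ Lμ * |x - x'| := fun t x x' => by
    simpa using hLμ t t x x'
  have hσx : ∀ t x x', |σ t x - σ t x'| ≤ Lσ * |x - x'| := fun t x x' => by
    simpa using hLσ t t x x'
  have hLμ0 : 0 ≤ Lμ := by simpa using (abs_nonneg _).trans (hμx 0 1 0)
  have hLσ0 : 0 ≤ Lσ := by simpa using (abs_nonneg _).trans (hσx 0 1 0)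
  have hCσ0 : 0 ≤ Cσ := (abs_nonneg _).trans (hCσ 0 0)
  obtain ⟨C, hC0, hC⟩ := kern_L1_bound hT hR hK
    (by positivity : 0 ≤ 2 * Cσ * Lσ / σ₀ ^ 2) hLμ0 hLσ0
  refine ⟨C, M, hC0, hM0, fun h t L ψ hh hhT hL x x' hxx => ?_⟩
  rcases eq_or_ne x x' with rfl | hne
  · simp
  set D := x - x' with hD
  have hD0 : D ≠ 0 := sub_ne_zero.2 hne
  set I0 := fun x => ∫ w, ψ (euler1 μ σ h t x w) ∂gauss1 h with hI0
  set I1 := fun x => ∫ w, ψ (euler1 μ σ h t x w) * H1s σ h t x w ∂gauss1 h with hI1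
  set I2 := fun x => ∫ w, ψ (euler1 μ σ h t x w) * H2s σ h t x w ∂gauss1 h with hI2
  obtain ⟨r, p, q, hmv, hr, hq, hp, hqσ⟩ :=
    hlin t x (I0 x) (I0 x') (I1 x) (I1 x') (I2 x) (I2 x')
  have hFx := hM t x x' (I0 x') (I0 x') (I1 x') (I1 x') (I2 x') (I2 x')
  simp only [sub_self, abs_zero, add_zero] at hFx
  have hpos : ∀ y, 0 < σ t y := fun y => hσ₀.trans_le (hσlb t y)
  have c1 := expect_combine (μ := μ) hh (hpos x) hL (1 + h * r) p q
  have c2 := expect_combine (μ := μ) hh (hpos x') hL (1 + h * r) p q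
  set b := (μ t x - μ t x') / D with hb
  set c := (σ t x - σ t x') / D with hc
  have hbD : D * b = μ t x - μ t x' := by simp only [hb]; field_simp
  have hcD : D * c = σ t x - σ t x' := by simp only [hc]; field_simp
  have hbL : |b| ≤ Lμ := by
    rw [hb, abs_div, div_le_iff₀ (abs_pos.2 hD0)]; exact hμx t x x'
  have hcL : |c| ≤ Lσ := by
    rw [hc, abs_div, div_le_iff₀ (abs_pos.2 hD0)]; exact hσx t x x'
  have hθ : ∀ θ ∈ Icc (0 : ℝ) 1, σ₀ ≤ σ t x' + θ * (D * c) := fun θ hθ => by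
    rw [hcD]
    have h1 := mul_le_mul_of_nonneg_left (hσlb t x) hθ.1
    have h2 := mul_le_mul_of_nonneg_left (hσlb t x') (sub_nonneg.2 hθ.2)
    linarith
  have hmain := lip_duality (k₀ := 1 + h * r) (k₁ := p) (k₂ := q / h) (m₀ := x' + μ t x' * h)
    (s₀ := σ t x') (dm := D * (1 + b * h)) (ds := D * c) (B := |D| * (1 + C * h)) hh hL
    (fun θ h01 => hσ₀.trans_le (hθ θ h01)) (fun θ h01 => by
      set s := σ t x' + θ * (D * c) with hs
      have hs0 := hθ θ h01
      have hk : ∀ w, |kern (1 + h * r) p (q / h) h (D * (1 + b * h)) (D * c) s w|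
          = |D| * |kern (1 + h * r) p (q / h) h (1 + b * h) c s w| := fun w => by
        rw [← abs_mul]; congr 1; simp only [kern]; ring
      simp only [hk, integral_const_mul]
      refine mul_le_mul_of_nonneg_left (hC h r p q s b c hh hhT hr hbL hcL hq hp
        (hσ₀.trans_le hs0) (hqσ.trans ?_)) (abs_nonneg _)
      -- replacing `σ(t,x)` by the interpolated `s` costs a factor `1 + O(h)` as `|x - x'| ≤ h`
      have hdiff : σ t x - s = (1 - θ) * (σ t x - σ t x') := by rw [hs, hcD]; ring
      have hd1 : |σ t x - s| ≤ Lσ * h := by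
        rw [hdiff, abs_mul, abs_of_nonneg (sub_nonneg.2 h01.2)]
        calc (1 - θ) * |σ t x - σ t x'| ≤ 1 * |σ t x - σ t x'| := by
              gcongr; linarith [h01.1]
          _ ≤ Lσ * h := by
              rw [one_mul]; exact (hσx t x x').trans (by gcongr)
      have hsC : s ≤ Cσ := by
        have e : s = θ * σ t x + (1 - θ) * σ t x' := by rw [hs, hcD]; ring
        have h1 := mul_le_mul_of_nonneg_left ((le_abs_self _).trans (hCσ t x)) h01.1
        have h2 := mul_le_mul_of_nonneg_left ((le_abs_self _).trans (hCσ t x'))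
          (sub_nonneg.2 h01.2)
        linarith
      have h1 : (σ t x - s) * (σ t x + s) ≤ (Lσ * h) * (2 * Cσ) := by
        refine mul_le_mul ((le_abs_self _).trans hd1) ?_ ?_ (by positivity)
        · linarith [(le_abs_self _).trans (hCσ t x)]
        · linarith [hσlb t x]
      have h2 : (Lσ * h) * (2 * Cσ) = σ₀ ^ 2 * (2 * Cσ * Lσ / σ₀ ^ 2 * h) := by
        field_simp
      have h3 : σ₀ ^ 2 * (2 * Cσ * Lσ / σ₀ ^ 2 * h) ≤ s ^ 2 * (2 * Cσ * Lσ / σ₀ ^ 2 * h) := by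
        gcongr
      linarith)
  have em : x' + μ t x' * h + D * (1 + b * h) = x + μ t x * h := by
    have : D * (1 + b * h) = D + D * b * h := by ring
    rw [this, hbD, hD]; ring
  have es : σ t x' + D * c = σ t x := by rw [hcD]; ring
  rw [em, es, ← c1, ← c2] at hmain
  have hsplit : step1 F μ σ h t ψ x - step1 F μ σ h t ψ x'
      = ((1 + h * r) * I0 x + h * (p * I1 x + q * I2 x)
          - ((1 + h * r) * I0 x' + h * (p * I1 x' + q * I2 x')))
        + h * (F t x (I0 x') (I1 x') (I2 x') - F t x' (I0 x') (I1 x') (I2 x')) := by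
    have : step1 F μ σ h t ψ x - step1 F μ σ h t ψ x'
      = I0 x - I0 x' + h * (F t x (I0 x) (I1 x) (I2 x) - F t x (I0 x') (I1 x') (I2 x'))
        + h * (F t x (I0 x') (I1 x') (I2 x') - F t x' (I0 x') (I1 x') (I2 x')) := by
      simp only [step1, hI0, hI1, hI2]; ring
    rw [this, hmv]; ring
  rw [hsplit]
  have hlast : |h * (F t x (I0 x') (I1 x') (I2 x') - F t x' (I0 x') (I1 x') (I2 x'))|
      ≤ h * (M * |D|) := by
    rw [abs_mul, abs_of_pos hh]; exact mul_le_mul_of_nonneg_left hFx hh.le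
  exact (abs_add_le _ _).trans ((add_le_add hmain hlast).trans_eq (by ring))

/-- A Lipschitz bound at distances at most `δ` is global on the line. -/
lemma lip_of_local {f : ℝ → ℝ} {δ Λ : ℝ} (hδ : 0 < δ)
    (hloc : ∀ x x', |x - x'| ≤ δ → |f x - f x'| ≤ Λ * |x - x'|) (x x' : ℝ) :
    |f x - f x'| ≤ Λ * |x - x'| := by
  obtain ⟨N, hN⟩ := exists_nat_gt (|x - x'| / δ)
  have hN0 : (0 : ℝ) < N := (div_nonneg (abs_nonneg _) hδ.le).trans_lt hN
  set η := (x - x') / N with hη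
  have hηabs : |η| = |x - x'| / N := by rw [hη, abs_div, abs_of_pos hN0]
  have hηδ : |η| ≤ δ := by
    rw [hηabs, div_le_iff₀ hN0]
    rw [div_lt_iff₀ hδ] at hN
    linarith
  have key : ∀ k : ℕ, |f (x' + k * η) - f x'| ≤ k * (Λ * |η|) := by
    intro k
    induction k with
    | zero => simp
    | succ k ih =>
      have e : x' + (k + 1 : ℕ) * η - (x' + k * η) = η := by push_cast; ring
      have h1 := hloc (x' + (k + 1 : ℕ) * η) (x' + k * η) (by rw [e]; exact hηδ)
      rw [e] at h1
      have h2 := abs_sub_le (f (x' + (k + 1 : ℕ) * η)) (f (x' + k * η)) (f x')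
      push_cast at h1 h2 ih ⊢
      linarith
  have h1 := key N
  have e : x' + N * η = x := by rw [hη]; field_simp; ring
  rw [e, hηabs] at h1
  refine h1.trans_eq ?_
  field_simp

lemma schemeAux1_lip {T C M Lg : ℝ} {F : ℝ → ℝ → ℝ → ℝ → ℝ → ℝ} {μ σ : ℝ → ℝ → ℝ} {g : ℝ → ℝ}
    (hC : 0 ≤ C) (hM : 0 ≤ M) {n : ℕ} (hh : 0 < T / n) (hhT : T / n ≤ T)
    (hstep : ∀ (h t L : ℝ) (ψ : ℝ → ℝ), 0 < h → h ≤ T →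
      (∀ y y', |ψ y - ψ y'| ≤ L * |y - y'|) → ∀ x x', |x - x'| ≤ h →
      |step1 F μ σ h t ψ x - step1 F μ σ h t ψ x'| ≤ ((1 + C * h) * L + M * h) * |x - x'|)
    (hg : ∀ y y', |g y - g y'| ≤ Lg * |y - y'|) (k : ℕ) (x x' : ℝ) :
    |schemeAux1 T F μ σ g n k x - schemeAux1 T F μ σ g n k x'|
      ≤ (1 + C * (T / n)) ^ k * (Lg + M * (k * (T / n))) * |x - x'| := by
  set h := T / n with hdef
  induction k generalizing x x' with
  | zero => simpa [schemeAux1] using hg x x'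
  | succ k ih =>
    have h1 := lip_of_local hh (hstep h (T - (k + 1) * h) _ _ hh hhT ih) x x'
    refine h1.trans (mul_le_mul_of_nonneg_right ?_ (abs_nonneg _))
    have h2 : 1 ≤ (1 + C * h) ^ (k + 1) :=
      one_le_pow₀ (by linarith [mul_nonneg hC hh.le])
    have h3 := mul_le_mul_of_nonneg_right h2 (mul_nonneg hM hh.le)
    have h4 : (1 + C * h) ^ (k + 1) * (Lg + M * ((k + 1 : ℕ) * h))
        = (1 + C * h) * ((1 + C * h) ^ k * (Lg + M * (k * h)))
          + (1 + C * h) ^ (k + 1) * (M * h) := by push_cast; ring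
    linarith

/-- Lemma 3.18 of the paper (`d = 1`): the discrete-time approximations `v^h(t_i,·)`
are Lipschitz in `x`, uniformly in `h = T/n` and in `i`. -/
theorem scheme_uniformly_lipschitz_in_x
    (T : ℝ) (hT : 0 < T)
    (μ σ : ℝ → ℝ → ℝ)
    (hμbdd : ∃ C : ℝ, ∀ s y, |μ s y| ≤ C)
    (hσbdd : ∃ C : ℝ, ∀ s y, |σ s y| ≤ C)
    (hμreg : ∃ L : ℝ, ∀ s s' y y' : ℝ,
      |μ s y - μ s' y'| ≤ L * (|y - y'| + Real.sqrt |s - s'|))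
    (hσreg : ∃ L : ℝ, ∀ s s' y y' : ℝ,
      |σ s y - σ s' y'| ≤ L * (|y - y'| + Real.sqrt |s - s'|))
    (σ₀ : ℝ) (hσ₀ : 0 < σ₀) (hσlb : ∀ s y, σ₀ ≤ σ s y)
    (F Fr Fp Fγ : ℝ → ℝ → ℝ → ℝ → ℝ → ℝ)
    (hF : AssumptionF1 σ F Fr Fp Fγ)
    (g : ℝ → ℝ) (hgbdd : ∃ Cg : ℝ, ∀ x, |g x| ≤ Cg)
    (hglip : ∃ Lg : NNReal, LipschitzWith Lg g) :
    ∃ L : ℝ, 0 < L ∧ ∀ n : ℕ, 0 < n → ∀ i : ℕ, i ≤ n → ∀ x x' : ℝ,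
      |vh1 T F μ σ g n i x - vh1 T F μ σ g n i x'| ≤ L * |x - x'| := by
  obtain ⟨C, M, hC, hM, hstep⟩ := step1_lip_local hT hσbdd hμreg hσreg hσ₀ hσlb hF
  obtain ⟨Lg, hLg⟩ := hglip
  have hg : ∀ y y', |g y - g y'| ≤ (Lg : ℝ) * |y - y'| := fun y y' => by
    simpa [Real.dist_eq] using hLg.dist_le_mul y y'
  have hLg0 : (0 : ℝ) ≤ Lg := Lg.2
  refine ⟨Real.exp (C * T) * (Lg + M * T) + 1, by positivity, fun n hn i _ x x' => ?_⟩
  have hn0 : (0 : ℝ) < n := Nat.cast_pos.2 hn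
  have hh : 0 < T / n := by positivity
  have hhT : T / n ≤ T := div_le_self hT.le (by exact_mod_cast hn)
  refine (schemeAux1_lip hC hM hh hhT hstep hg (n - i) x x').trans
    (mul_le_mul_of_nonneg_right ?_ (abs_nonneg _))
  have hk : ((n - i : ℕ) : ℝ) * (T / n) ≤ T := by
    have : ((n - i : ℕ) : ℝ) ≤ n := by exact_mod_cast Nat.sub_le n i
    calc ((n - i : ℕ) : ℝ) * (T / n) ≤ n * (T / n) := by gcongr
      _ = T := by field_simp
  have hpow : (1 + C * (T / n)) ^ (n - i) ≤ Real.exp (C * T) := by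
    calc (1 + C * (T / n)) ^ (n - i) ≤ Real.exp (C * (T / n)) ^ (n - i) := by
          gcongr; linarith [Real.add_one_le_exp (C * (T / n))]
      _ = Real.exp (C * (((n - i : ℕ) : ℝ) * (T / n))) := by
          rw [← Real.exp_nat_mul]; congr 1; ring
      _ ≤ Real.exp (C * T) := by gcongr
  have : (1 + C * (T / n)) ^ (n - i) * (Lg + M * (((n - i : ℕ) : ℝ) * (T / n)))
      ≤ Real.exp (C * T) * (Lg + M * T) := by gcongr
  linarith

end
end
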